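/- Let (u, π, v, θ) be a smooth solution of the stationary 3D tropical climate model. Assume that as |x| → +∞: |x|^{2/3}|u(x)| → 0, |x|^{4/3}|v(x)| remains bounded, and |x|^{2/3}|θ(x)| → 0 (that is, u(x) = o(|x|^{−2/3}), v(x) = O(|x|^{−4/3}), θ(x) = o(|x|^{−2/3})). Then u = 0, v = 0 and θ = 0 identically on ℝ³. -/

import Mathlib

open MeasureTheory Filter Metric

noncomputable section

abbrev R3 : Type := EuclideanSpace ℝ (Fin 3)

/-- Partial derivative of `f` in the `j`-th coordinate direction. -/
def pd (f : R3 → ℝ) (j : Fin 3) (x : R3) : ℝ :=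
  fderiv ℝ f x (EuclideanSpace.single j 1)

/-- Laplacian of `f`. -/
def lap (f : R3 → ℝ) (x : R3) : ℝ := ∑ j, pd (pd f j) j x

/-- The stationary 3D tropical climate model:
`-Δu + (u·∇)u + ∇π + div(v⊗v) = 0`, `-Δv + (u·∇)v + ∇θ + (v·∇)u = 0`,
`-Δθ + u·∇θ + div v = 0`, `div u = 0`. -/
def TCM (u v : R3 → R3) (pr θ : R3 → ℝ) : Prop :=
  (∀ i x, -lap (fun y => u y i) x + (∑ j, u x j * pd (fun y => u y i) j x)
      + pd pr i x + (∑ j, pd (fun y => v y j * v y i) j x) = 0) ∧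
  (∀ i x, -lap (fun y => v y i) x + (∑ j, u x j * pd (fun y => v y i) j x)
      + pd θ i x + (∑ j, v x j * pd (fun y => u y i) j x) = 0) ∧
  (∀ x, -lap θ x + (∑ j, u x j * pd θ j x) + (∑ j, pd (fun y => v y j) j x) = 0) ∧
  (∀ x, (∑ j, pd (fun y => u y j) j x) = 0)

abbrev Sm (f : R3 → ℝ) : Prop := ContDiff ℝ (⊤ : ℕ∞) f

lemma Sm.diff {f : R3 → ℝ} (hf : Sm f) (x : R3) : DifferentiableAt ℝ f x :=
  (hf.differentiable (by simp)) x

lemma Sm.pd {f : R3 → ℝ} (hf : Sm f) (j : Fin 3) : Sm (pd f j) := by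
  have h : ContDiff ℝ (⊤ : ℕ∞) (fderiv ℝ f) := hf.fderiv_right (by simp)
  exact h.clm_apply contDiff_const

lemma Sm.lap {f : R3 → ℝ} (hf : Sm f) : Sm (lap f) := by
  have : _root_.lap f = fun x => ∑ j, _root_.pd (_root_.pd f j) j x := rfl
  rw [this]
  exact ContDiff.sum fun j _ => (hf.pd j).pd j

lemma Sm.mul' {f g : R3 → ℝ} (hf : Sm f) (hg : Sm g) : Sm (fun x => f x * g x) := ContDiff.mul hf hg

lemma pd_mul {f g : R3 → ℝ} (hf : Sm f) (hg : Sm g) (j : Fin 3) (x : R3) :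
    pd (fun y => f y * g y) j x = pd f j x * g x + f x * pd g j x := by
  unfold pd
  rw [fderiv_fun_mul (hf.diff x) (hg.diff x)]
  simp; ring

lemma pd_add {f g : R3 → ℝ} (hf : Sm f) (hg : Sm g) (j : Fin 3) (x : R3) :
    pd (fun y => f y + g y) j x = pd f j x + pd g j x := by
  unfold pd
  rw [fderiv_fun_add (hf.diff x) (hg.diff x)]
  simp

lemma pd_sub {f g : R3 → ℝ} (hf : Sm f) (hg : Sm g) (j : Fin 3) (x : R3) :
    pd (fun y => f y - g y) j x = pd f j x - pd g j x := by
  unfold pd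
  rw [fderiv_fun_sub (hf.diff x) (hg.diff x)]
  simp

lemma pd_cmul (c : ℝ) {f : R3 → ℝ} (hf : Sm f) (j : Fin 3) (x : R3) :
    pd (fun y => c * f y) j x = c * pd f j x := by
  unfold pd
  rw [fderiv_const_mul (hf.diff x)]
  simp

lemma pd_sum {ι : Type*} (s : Finset ι) {f : ι → R3 → ℝ} (hf : ∀ i, Sm (f i)) (j : Fin 3) (x : R3) :
    pd (fun y => ∑ i ∈ s, f i y) j x = ∑ i ∈ s, pd (f i) j x := by
  unfold pd
  rw [fderiv_fun_sum (fun i _ => (hf i).diff x)]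
  simp

lemma pd_comm {f : R3 → ℝ} (hf : Sm f) (i j : Fin 3) (x : R3) :
    pd (pd f i) j x = pd (pd f j) i x := by
  have h : ContDiff ℝ (⊤ : ℕ∞) (fderiv ℝ f) := hf.fderiv_right (by simp)
  have hd : DifferentiableAt ℝ (fderiv ℝ f) x := (h.differentiable (by simp)) x
  have key : ∀ a b : Fin 3, pd (pd f a) b x
      = fderiv ℝ (fderiv ℝ f) x (EuclideanSpace.single b 1) (EuclideanSpace.single a 1) := by
    intro a b
    have : pd f a = fun y => fderiv ℝ f y (EuclideanSpace.single a 1) := rfl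
    rw [this]
    unfold pd
    rw [fderiv_clm_apply hd (differentiableAt_const _)]
    simp
  rw [key, key]
  exact (hf.contDiffAt.isSymmSndFDerivAt (by
    simp only [minSmoothness_of_isRCLikeNormedField]
    exact WithTop.coe_le_coe.2 (le_top : (2 : ℕ∞) ≤ ⊤))) _ _

lemma pd_cs {f : R3 → ℝ} (hf : HasCompactSupport f) (j : Fin 3) : HasCompactSupport (pd f j) :=
  hf.fderiv_apply ℝ _

/-- scaling -/
lemma pd_scale (c : ℝ) {f : R3 → ℝ} (_hf : Sm f) (j : Fin 3) (x : R3) :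
    pd (fun y => f (c • y)) j x = c * pd f j (c • x) := by
  unfold pd
  have := fderiv_comp_smul (𝕜 := ℝ) (f := f) c (x := x)
  rw [this]
  simp

lemma Sm.scale (c : ℝ) {f : R3 → ℝ} (hf : Sm f) : Sm (fun y => f (c • y)) :=
  hf.comp (contDiff_const_smul c)

lemma lap_scale (c : ℝ) {f : R3 → ℝ} (hf : Sm f) (x : R3) :
    lap (fun y => f (c • y)) x = c ^ 2 * lap f (c • x) := by
  unfold lap
  rw [Finset.mul_sum]
  refine Finset.sum_congr rfl fun j _ => ?_
  have : pd (fun y => f (c • y)) j = fun y => c * pd f j (c • y) := by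
    funext y; exact pd_scale c hf j y
  rw [this, pd_cmul c ((hf.pd j).scale c), pd_scale c (hf.pd j)]
  ring

lemma cs_int {f : R3 → ℝ} (hf : Continuous f) (h : HasCompactSupport f) : Integrable f :=
  hf.integrable_of_hasCompactSupport h

lemma ibp {f g : R3 → ℝ} (hf : Sm f) (hg : Sm g) (hc : HasCompactSupport g) (j : Fin 3) :
    ∫ x, f x * pd g j x = - ∫ x, pd f j x * g x := by
  unfold pd
  refine integral_mul_fderiv_eq_neg_fderiv_mul_of_integrable ?_ ?_ ?_
    (fun x _ => hf.diff x) (fun x _ => hg.diff x)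
  · exact cs_int (((hf.pd j).mul' hg).continuous) hc.mul_left
  · exact cs_int ((hf.mul' (hg.pd j)).continuous) (pd_cs hc j).mul_left
  · exact cs_int ((hf.mul' hg).continuous) hc.mul_left

lemma int_pd {g : R3 → ℝ} (hg : Sm g) (hc : HasCompactSupport g) (j : Fin 3) :
    ∫ x, pd g j x = 0 := by
  have h := ibp (f := fun _ => 1) contDiff_const hg hc j
  simpa [pd] using h

def conv (f G : R3 → ℝ) (x : R3) : ℝ := ∫ t, f t * G (x - t)

lemma conv_eq (f G : R3 → ℝ) :
    conv f G = MeasureTheory.convolution f G (ContinuousLinearMap.mul ℝ ℝ) volume := by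
  funext x; rfl

lemma conv_sm {f G : R3 → ℝ} (hf : Continuous f) (hG : Sm G) (hc : HasCompactSupport G) :
    Sm (conv f G) := by
  rw [conv_eq]
  exact hc.contDiff_convolution_right _ hf.locallyIntegrable hG

lemma pd_conv {f G : R3 → ℝ} (hf : Continuous f) (hG : Sm G) (hc : HasCompactSupport G) (j : Fin 3) :
    pd (conv f G) j = conv f (pd G j) := by
  funext x
  have h1 : ContDiff ℝ 1 G := hG.of_le (by exact_mod_cast le_top)
  have := hc.hasFDerivAt_convolution_right (ContinuousLinearMap.mul ℝ ℝ) hf.locallyIntegrable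
    h1 (x₀ := x) (μ := volume)
  rw [conv_eq, conv_eq]
  unfold pd
  rw [this.fderiv, convolution_precompR_apply _ hf.locallyIntegrable (hc.fderiv ℝ)
    (h1.continuous_fderiv one_ne_zero)]

lemma conv_pd {f G : R3 → ℝ} (hf : Sm f) (hG : Sm G) (hc : HasCompactSupport G) (j : Fin 3) :
    conv f (pd G j) = conv (pd f j) G := by
  funext x
  unfold conv
  have hr : Sm (fun t => G (x - t)) := hG.comp (contDiff_const.sub contDiff_id)
  have hrc : HasCompactSupport (fun t => G (x - t)) :=
    hc.comp_homeomorph (Homeomorph.subLeft x)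
  have e : ∀ t, pd (fun t => G (x - t)) j t = - pd G j (x - t) := by
    intro t
    unfold pd
    have h1 : HasFDerivAt (fun t : R3 => x - t) (-ContinuousLinearMap.id ℝ R3) t :=
      (hasFDerivAt_id t).const_sub x
    have h2 := ((hG.diff (x - t)).hasFDerivAt.comp t h1).fderiv
    have h3 : (G ∘ fun t : R3 => x - t) = fun t => G (x - t) := rfl
    rw [h3] at h2
    rw [h2]
    simp
  have := ibp hf hr hrc j
  simp only [e] at this
  rw [← neg_inj, ← this, ← integral_neg]
  congr 1; funext t; ring

lemma conv_integrable {f G : R3 → ℝ} (hf : Continuous f) (hG : Continuous G)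
    (hc : HasCompactSupport G) (x : R3) : Integrable (fun t => f t * G (x - t)) := by
  refine cs_int (hf.mul (hG.comp (continuous_const.sub continuous_id))) ?_
  exact HasCompactSupport.mul_left (hc.comp_homeomorph (Homeomorph.subLeft x))

lemma conv_bound {f G : R3 → ℝ} {b r : ℝ} {x : R3} (hG : Continuous G)
    (hc : HasCompactSupport G) (hs : ∀ z, r < ‖z‖ → G z = 0)
    (hb : ∀ y, ‖x - y‖ ≤ r → |f y| ≤ b) : |conv f G x| ≤ b * ∫ z, |G z| := by
  unfold conv
  have hi : Integrable (fun t => |G (x - t)|) :=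
    (cs_int hG hc).abs.comp_sub_left x
  calc |∫ t, f t * G (x - t)| ≤ ∫ t, b * |G (x - t)| := by
        rw [← Real.norm_eq_abs]
        refine norm_integral_le_of_norm_le (hi.const_mul b) (Eventually.of_forall fun t => ?_)
        rw [norm_mul, Real.norm_eq_abs, Real.norm_eq_abs]
        by_cases h : ‖x - t‖ ≤ r
        · exact mul_le_mul_of_nonneg_right (hb t h) (abs_nonneg _)
        · rw [hs _ (not_le.1 h)]; simp
    _ = b * ∫ z, |G z| := by
        rw [integral_const_mul]
        congr 1
        exact integral_sub_left_eq_self (fun z => |G z|) volume x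

lemma conv_zero {f G : R3 → ℝ} {r : ℝ} {x : R3}
    (hs : ∀ z, r < ‖z‖ → G z = 0)
    (hb : ∀ y, ‖x - y‖ ≤ r → f y = 0) : conv f G x = 0 := by
  unfold conv
  have : ∀ t, f t * G (x - t) = 0 := by
    intro t
    by_cases h : ‖x - t‖ ≤ r
    · rw [hb t h, zero_mul]
    · rw [hs _ (not_le.1 h), mul_zero]
  simp [this]

lemma fubini_conv {p f G : R3 → ℝ} (hp : Continuous p) (hf : Continuous f) (hG : Continuous G)
    (hfc : HasCompactSupport f) (hc : HasCompactSupport G) (hev : ∀ z, G (-z) = G z) :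
    ∫ x, p x * conv f G x = ∫ x, f x * conv p G x := by
  unfold conv
  simp only [← integral_const_mul]
  have hcs : HasCompactSupport (Function.uncurry fun x t => p x * (f t * G (x - t))) := by
    refine HasCompactSupport.intro
      ((hfc.isCompact.prod hc.isCompact).image
        (f := fun q : R3 × R3 => (q.1 + q.2, q.1)) (by fun_prop)) ?_
    rintro ⟨x, t⟩ h
    simp only [Function.uncurry]
    by_contra hne
    apply h
    refine ⟨(t, x - t), ⟨subset_tsupport _ ?_, subset_tsupport _ ?_⟩, by simp⟩
    · intro h0; apply hne; simp [h0]
    · intro h0; apply hne; simp only at h0; simp [h0]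
  rw [integral_integral_swap_of_hasCompactSupport (f := fun x t => p x * (f t * G (x - t)))
    (show Continuous fun q : R3 × R3 => p q.1 * (f q.2 * G (q.1 - q.2)) by fun_prop) hcs]
  congr 1; funext t; congr 1; funext x
  rw [← hev (x - t), neg_sub]; ring


lemma sm_normsq : Sm (fun z : R3 => ‖z‖ ^ 2) := contDiff_norm_sq ℝ

lemma pd_radial {ψ : ℝ → ℝ} (hψ : ContDiff ℝ (⊤ : ℕ∞) ψ) (j : Fin 3) (z : R3) :
    pd (fun z => ψ (‖z‖ ^ 2)) j z = 2 * z j * deriv ψ (‖z‖ ^ 2) := by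
  unfold pd
  have h1 : HasFDerivAt (fun z : R3 => ‖z‖ ^ 2) (2 • (innerSL ℝ) z) z :=
    (hasStrictFDerivAt_norm_sq z).hasFDerivAt
  have h2 : HasDerivAt ψ (deriv ψ (‖z‖ ^ 2)) (‖z‖ ^ 2) :=
    ((hψ.differentiable (by simp)) _).hasDerivAt
  have h3 := (h2.comp_hasFDerivAt z h1).fderiv
  have h4 : (ψ ∘ fun z : R3 => ‖z‖ ^ 2) = fun z => ψ (‖z‖ ^ 2) := rfl
  rw [h4] at h3
  rw [h3]
  simp [EuclideanSpace.inner_single_right]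
  ring

lemma sm_coord (j : Fin 3) : Sm (fun z : R3 => z j) :=
  (EuclideanSpace.proj (𝕜 := ℝ) j).contDiff

lemma pd_coord (i j : Fin 3) (z : R3) : pd (fun z : R3 => z i) j z = if i = j then 1 else 0 := by
  unfold pd
  have : fderiv ℝ (fun z : R3 => z i) z = EuclideanSpace.proj (𝕜 := ℝ) i :=
    (EuclideanSpace.proj (𝕜 := ℝ) i).fderiv
  rw [this]
  simp

lemma deriv_sm {ψ : ℝ → ℝ} (hψ : ContDiff ℝ (⊤ : ℕ∞) ψ) : ContDiff ℝ (⊤ : ℕ∞) (deriv ψ) :=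
  (contDiff_infty_iff_deriv.1 hψ).2

lemma lap_radial {ψ : ℝ → ℝ} (hψ : ContDiff ℝ (⊤ : ℕ∞) ψ) (z : R3) :
    lap (fun z => ψ (‖z‖ ^ 2)) z
      = 6 * deriv ψ (‖z‖ ^ 2) + 4 * ‖z‖ ^ 2 * deriv (deriv ψ) (‖z‖ ^ 2) := by
  unfold lap
  have h : ∀ j, pd (fun z => ψ (‖z‖ ^ 2)) j = fun z : R3 => (2 * z j) * deriv ψ (‖z‖ ^ 2) := by
    intro j; funext z; exact pd_radial hψ j z
  have hs : Sm (fun z : R3 => deriv ψ (‖z‖ ^ 2)) := (deriv_sm hψ).comp sm_normsq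
  have hj : ∀ j, Sm (fun z : R3 => 2 * z j) := fun j => contDiff_const.mul (sm_coord j)
  have h2 : ∀ j, pd (fun z : R3 => (2 * z j) * deriv ψ (‖z‖ ^ 2)) j z
      = 2 * deriv ψ (‖z‖ ^ 2) + 4 * (z j) ^ 2 * deriv (deriv ψ) (‖z‖ ^ 2) := by
    intro j
    rw [pd_mul (hj j) hs, pd_cmul 2 (sm_coord j), pd_coord, pd_radial (deriv_sm hψ)]
    simp; ring
  simp only [h, h2]
  have hn : ‖z‖ ^ 2 = z 0 ^ 2 + z 1 ^ 2 + z 2 ^ 2 := by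
    simp [EuclideanSpace.norm_sq_eq, Fin.sum_univ_three]
  rw [Fin.sum_univ_three]
  linear_combination (-4 * deriv (deriv ψ) (‖z‖ ^ 2)) * hn

def psi (t : ℝ) : ℝ :=
  (Real.sqrt (Real.smoothTransition t * t + (1 - Real.smoothTransition t)))⁻¹

lemma psi_pos (t : ℝ) : 0 < Real.smoothTransition t * t + (1 - Real.smoothTransition t) := by
  rcases le_or_gt t 0 with h | h
  · rw [Real.smoothTransition.zero_of_nonpos h]; simp
  · have h0 := Real.smoothTransition.nonneg t
    have h1 := Real.smoothTransition.le_one t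
    rcases h0.eq_or_lt with h2 | h2
    · rw [← h2]; simp
    · nlinarith [mul_pos h2 h]

lemma psi_sm : ContDiff ℝ (⊤ : ℕ∞) psi := by
  have h : ContDiff ℝ (⊤ : ℕ∞) Real.smoothTransition := Real.smoothTransition.contDiff
  have h2 : ContDiff ℝ (⊤ : ℕ∞)
      (fun t => Real.smoothTransition t * t + (1 - Real.smoothTransition t)) :=
    (h.mul contDiff_id).add (contDiff_const.sub h)
  exact (h2.sqrt fun t => (psi_pos t).ne').inv fun t => (Real.sqrt_pos.2 (psi_pos t)).ne'

lemma psi_ge {t : ℝ} (h : 1 ≤ t) : psi t = (Real.sqrt t)⁻¹ := by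
  unfold psi
  rw [Real.smoothTransition.one_of_one_le h]; simp

lemma dpsi {t : ℝ} (h : 1 < t) : deriv psi t = - (2 * t * Real.sqrt t)⁻¹ := by
  have he : psi =ᶠ[nhds t] fun t => (Real.sqrt t)⁻¹ := by
    filter_upwards [lt_mem_nhds h] with s hs using psi_ge hs.le
  rw [he.deriv_eq]
  have ht : 0 < t := by linarith
  have hs : 0 < Real.sqrt t := Real.sqrt_pos.2 ht
  have := ((Real.hasDerivAt_sqrt ht.ne').inv hs.ne').deriv
  have e : (fun t => (Real.sqrt t)⁻¹) = (Real.sqrt)⁻¹ := rfl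
  rw [e, this, Real.sq_sqrt ht.le]
  field_simp

lemma ddpsi {t : ℝ} (h : 1 < t) : 6 * deriv psi t + 4 * t * deriv (deriv psi) t = 0 := by
  have he : deriv psi =ᶠ[nhds t] fun t => - (2 * t * Real.sqrt t)⁻¹ := by
    filter_upwards [lt_mem_nhds h] with s hs using dpsi hs
  rw [he.deriv_eq, dpsi h]
  have ht : 0 < t := by linarith
  have hs : 0 < Real.sqrt t := Real.sqrt_pos.2 ht
  have h1 : HasDerivAt (fun t => 2 * t * Real.sqrt t) (2 * Real.sqrt t + 2 * t * (1 / (2 * Real.sqrt t))) t := by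
    have := ((hasDerivAt_id t).const_mul 2).mul (Real.hasDerivAt_sqrt ht.ne')
    refine (this.congr_deriv ?_ : HasDerivAt (fun t => 2 * t * Real.sqrt t) _ t)
    simp
  have h2 := (h1.inv (by positivity)).neg.deriv
  have e : (fun t => - (2 * t * Real.sqrt t)⁻¹) = -(fun t => 2 * t * Real.sqrt t)⁻¹ := rfl
  rw [e, h2]
  have hq : Real.sqrt t ^ 2 = t := Real.sq_sqrt ht.le
  have hq4 : Real.sqrt t ^ 4 = t ^ 2 := by
    rw [show (4:ℕ) = 2 * 2 by norm_num, pow_mul, hq]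
  field_simp
  nlinarith [hq, hq4]

lemma lap_psi_int : ∫ z : R3, lap (fun z => psi (‖z‖ ^ 2)) z ≠ 0 := by
  simp only [lap_radial psi_sm]
  have h := integral_fun_norm_addHaar (volume : Measure R3)
    (fun y : ℝ => 6 * deriv psi (y ^ 2) + 4 * y ^ 2 * deriv (deriv psi) (y ^ 2))
  rw [h]
  have h3 : Module.finrank ℝ R3 = 3 := by simp
  have hd : ∀ y : ℝ, HasDerivAt (fun y => 2 * y ^ 3 * deriv psi (y ^ 2))
      (y ^ 2 * (6 * deriv psi (y ^ 2) + 4 * y ^ 2 * deriv (deriv psi) (y ^ 2))) y := by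
    intro y
    have a1 : HasDerivAt (fun y : ℝ => y ^ 2) (2 * y) y := by simpa using hasDerivAt_pow 2 y
    have a2 : HasDerivAt (fun y : ℝ => 2 * y ^ 3) (2 * (3 * y ^ 2)) y := by
      simpa using (hasDerivAt_pow 3 y).const_mul 2
    have a3 : HasDerivAt (deriv psi) (deriv (deriv psi) (y ^ 2)) (y ^ 2) :=
      (((deriv_sm psi_sm).differentiable (by simp)) _).hasDerivAt
    have a4 := a2.mul (HasDerivAt.comp (h₂ := deriv psi) (h := fun y : ℝ => y ^ 2) y a3 a1)
    refine a4.congr_deriv ?_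
    simp only [Function.comp]
    ring
  have c1 := (deriv_sm psi_sm).continuous
  have c2 := (deriv_sm (deriv_sm psi_sm)).continuous
  have key : ∫ y in Set.Ioi (0 : ℝ), y ^ 2 * (6 * deriv psi (y ^ 2)
      + 4 * y ^ 2 * deriv (deriv psi) (y ^ 2)) = -1 := by
    have e1 : ∫ y in Set.Ioi (0 : ℝ), y ^ 2 * (6 * deriv psi (y ^ 2)
      + 4 * y ^ 2 * deriv (deriv psi) (y ^ 2)) = ∫ y in Set.Ioc (0 : ℝ) 2, y ^ 2 * (6 * deriv psi (y ^ 2)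
      + 4 * y ^ 2 * deriv (deriv psi) (y ^ 2)) := by
      refine setIntegral_eq_of_subset_of_forall_sdiff_eq_zero measurableSet_Ioi
        Set.Ioc_subset_Ioi_self ?_
      intro y hy
      have hy2 : 2 < y := by
        by_contra hh
        exact hy.2 ⟨hy.1, not_lt.1 hh⟩
      rw [ddpsi (by nlinarith), mul_zero]
    rw [e1, ← intervalIntegral.integral_of_le (by norm_num),
      intervalIntegral.integral_eq_sub_of_hasDerivAt (fun y _ => hd y)
        (Continuous.intervalIntegrable (by fun_prop) _ _)]
    rw [dpsi (by norm_num)]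
    have : Real.sqrt (2 ^ 2) = 2 := by simp
    rw [this]; norm_num
  simp only [h3, smul_eq_mul]
  norm_num
  have hv : (volume : Measure R3).real (ball 0 1) ≠ 0 := by
    rw [Measure.real, ENNReal.toReal_ne_zero]
    exact ⟨(measure_ball_pos _ _ one_pos).ne', measure_ball_lt_top.ne⟩
  refine ⟨hv, ?_⟩
  rw [key]; norm_num

lemma exists_kernel : ∃ ρ Φ : R3 → ℝ, ∃ c : ℝ, Sm ρ ∧ Sm Φ ∧ (∀ z, ρ (-z) = ρ z) ∧
    (∀ z, 1 < ‖z‖ → ρ z = 0) ∧ (∫ z, ρ z = 1) ∧ (∀ z, lap Φ z = ρ z) ∧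
    (∀ z, 1 ≤ ‖z‖ → Φ z = c * ‖z‖⁻¹) := by
  set I := ∫ z : R3, lap (fun z => psi (‖z‖ ^ 2)) z with hI
  have hI0 : I ≠ 0 := lap_psi_int
  have hs : Sm (fun z : R3 => psi (‖z‖ ^ 2)) := psi_sm.comp sm_normsq
  refine ⟨fun z => I⁻¹ * lap (fun z => psi (‖z‖ ^ 2)) z, fun z => I⁻¹ * psi (‖z‖ ^ 2), I⁻¹,
    contDiff_const.mul hs.lap, contDiff_const.mul hs, ?_, ?_, ?_, ?_, ?_⟩
  · intro z; simp only [lap_radial psi_sm, norm_neg]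
  · intro z hz; simp only [lap_radial psi_sm]; rw [ddpsi (by nlinarith), mul_zero]
  · rw [integral_const_mul, ← hI, inv_mul_cancel₀ hI0]
  · intro z
    unfold lap
    simp only [Finset.mul_sum]
    refine Finset.sum_congr rfl fun j _ => ?_
    have : pd (fun z : R3 => I⁻¹ * psi (‖z‖ ^ 2)) j = fun z => I⁻¹ * pd (fun z => psi (‖z‖ ^ 2)) j z := by
      funext z; exact pd_cmul _ hs j z
    rw [this, pd_cmul _ (hs.pd j)]
  · intro z hz
    simp only
    rw [psi_ge (by nlinarith), Real.sqrt_sq (norm_nonneg _)]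


lemma pd_zero_out {G : R3 → ℝ} {r : ℝ} (h : ∀ z, r < ‖z‖ → G z = 0) (j : Fin 3) :
    ∀ z, r < ‖z‖ → pd G j z = 0 := by
  intro z hz
  have he : G =ᶠ[nhds z] fun _ => 0 := by
    have : ∀ᶠ y : R3 in nhds z, r < ‖y‖ := continuous_norm.continuousAt.eventually (lt_mem_nhds hz)
    filter_upwards [this] with y hy using h y hy
  unfold pd
  rw [he.fderiv_eq]
  simp

lemma lap_zero_out {G : R3 → ℝ} {r : ℝ} (h : ∀ z, r < ‖z‖ → G z = 0) :
    ∀ z, r < ‖z‖ → lap G z = 0 := by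
  intro z hz
  unfold lap
  exact Finset.sum_eq_zero fun j _ => pd_zero_out (pd_zero_out h j) j z hz

lemma cs_of_out {G : R3 → ℝ} {r : ℝ} (h : ∀ z, r < ‖z‖ → G z = 0) : HasCompactSupport G := by
  refine HasCompactSupport.intro (isCompact_closedBall (0 : R3) r) fun z hz => h z ?_
  simpa using hz

lemma hess_l2 {g : R3 → ℝ} (hg : Sm g) (hc : HasCompactSupport g) :
    ∑ i, ∑ j, ∫ x, (pd (pd g i) j x) ^ 2 = ∫ x, (lap g x) ^ 2 := by
  have key : ∀ i j, ∫ x, (pd (pd g i) j x) ^ 2 = ∫ x, pd (pd g j) j x * pd (pd g i) i x := by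
    intro i j
    have h1 := ibp (f := pd (pd g i) j) ((hg.pd i).pd j) (hg.pd i) (pd_cs hc i) j
    have h2 := ibp (f := pd (pd g j) j) ((hg.pd j).pd j) (hg.pd i) (pd_cs hc i) i
    have h3 : ∀ x, pd (pd (pd g i) j) j x = pd (pd (pd g j) j) i x := by
      intro x
      have : pd (pd g i) j = pd (pd g j) i := by funext y; exact pd_comm hg i j y
      rw [this]
      exact pd_comm (hg.pd j) i j x
    simp only [pow_two]
    rw [h1, h2]
    simp only [h3]
  have e : ∀ x, (lap g x) ^ 2 = ∑ i, ∑ j, pd (pd g j) j x * pd (pd g i) i x := by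
    intro x
    unfold lap
    simp only [Fin.sum_univ_three]
    ring
  simp only [e, key]
  have hi : ∀ i j, Integrable (fun x => pd (pd g j) j x * pd (pd g i) i x) := fun i j =>
    cs_int (((hg.pd j).pd j).continuous.mul ((hg.pd i).pd i).continuous)
      (pd_cs (pd_cs hc i) i).mul_left
  rw [integral_finsetSum _ fun i _ => integrable_finsetSum _ fun j _ => hi i j]
  refine Finset.sum_congr rfl fun i _ => ?_
  rw [integral_finsetSum _ fun j _ => hi i j]

def V3 : ℝ := (volume : Measure R3).real (closedBall 0 3)

lemma V3_nonneg : 0 ≤ V3 := measureReal_nonneg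

lemma int_bound {k : R3 → ℝ} {c : ℝ} (h0 : ∀ x, 3 < ‖x‖ → k x = 0) (h : ∀ x, |k x| ≤ c) :
    |∫ x, k x| ≤ c * V3 := by
  have : ∫ x in closedBall (0 : R3) 3, k x = ∫ x, k x :=
    setIntegral_eq_integral_of_forall_compl_eq_zero fun x hx => h0 x (by simpa using hx)
  rw [← this, ← Real.norm_eq_abs]
  exact norm_setIntegral_le_of_norm_le_const measure_closedBall_lt_top fun x _ => h x

lemma int_amgm {F w : R3 → ℝ} {b m : ℝ} (hm : 0 < m) (hb : 0 ≤ b) (hF : ∀ x, w x ≠ 0 → |F x| ≤ b)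
    (hw : Continuous w) (h0 : ∀ x, 3 < ‖x‖ → w x = 0) :
    |∫ x, F x * w x| ≤ b / 2 * (m * V3 + m⁻¹ * ∫ x, (w x) ^ 2) := by
  have hi : Integrable (fun x => (w x) ^ 2) :=
    cs_int (hw.pow 2) (cs_of_out (r := 3) fun x hx => by simp [h0 x hx])
  have hind : Integrable ((closedBall (0 : R3) 3).indicator fun _ => (1 : ℝ)) :=
    (integrable_indicator_iff measurableSet_closedBall).2
      (integrableOn_const (measure_closedBall_lt_top.ne))
  have hV : ∫ x, (closedBall (0 : R3) 3).indicator (fun _ => (1 : ℝ)) x = V3 := by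
    rw [integral_indicator measurableSet_closedBall]; simp [V3, Measure.real]
  have : b / 2 * (m * V3 + m⁻¹ * ∫ x, (w x) ^ 2)
      = ∫ x, b / 2 * (m * (closedBall (0 : R3) 3).indicator (fun _ => (1 : ℝ)) x + m⁻¹ * (w x) ^ 2) := by
    rw [integral_const_mul, integral_add (hind.const_mul m) (hi.const_mul _), integral_const_mul,
      integral_const_mul, hV]
  rw [this, ← Real.norm_eq_abs]
  refine norm_integral_le_of_norm_le (((hind.const_mul m).add (hi.const_mul _)).const_mul _)
    (Eventually.of_forall fun x => ?_)
  rw [Real.norm_eq_abs, abs_mul]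
  by_cases hx : w x = 0
  · rw [hx]
    have : 0 ≤ (closedBall (0 : R3) 3).indicator (fun _ => (1 : ℝ)) x :=
      Set.indicator_nonneg (fun _ _ => zero_le_one) x
    simp only [abs_zero, mul_zero]
    positivity
  · have hin : x ∈ closedBall (0 : R3) 3 := by
      by_contra hh
      exact hx (h0 x (by simpa using hh))
    rw [Set.indicator_of_mem hin]
    have h1 : |w x| ≤ (m * 1 + m⁻¹ * (w x) ^ 2) / 2 := by
      have : (m * 1 + m⁻¹ * (w x) ^ 2) / 2 - |w x| = m⁻¹ / 2 * (m - |w x|) ^ 2 := by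
        rw [← sq_abs (w x)]; field_simp; ring
      have h2 : 0 ≤ m⁻¹ / 2 * (m - |w x|) ^ 2 := by positivity
      linarith
    calc |F x| * |w x| ≤ b * ((m * 1 + m⁻¹ * (w x) ^ 2) / 2) := by
          gcongr
          exact hF x hx
      _ = _ := by ring

lemma conv_lin {ν : ℝ} {L f : R3 → ℝ} {F : Fin 3 → R3 → ℝ} {G : R3 → ℝ}
    (hL : Continuous L) (hF : ∀ j, Continuous (F j)) (hG : Continuous G) (hc : HasCompactSupport G)
    (hf : ∀ x, f x = ν * L x - ∑ j, F j x) (x : R3) :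
    conv f G x = ν * conv L G x - ∑ j, conv (F j) G x := by
  unfold conv
  have hi := fun j => conv_integrable (hF j) hG hc x
  have hl := conv_integrable hL hG hc x
  rw [← integral_const_mul, ← integral_finsetSum _ fun j _ => hi j,
    ← integral_sub (hl.const_mul _) (integrable_finsetSum _ fun j _ => hi j)]
  congr 1; funext t
  rw [hf, sub_mul, Finset.sum_mul]; ring

lemma lap_conv {f G : R3 → ℝ} (hf : Continuous f) (hG : Sm G) (hc : HasCompactSupport G) (x : R3) :
    lap (conv f G) x = conv f (lap G) x := by
  unfold lap
  simp only [pd_conv hf hG hc, pd_conv hf (hG.pd _) (pd_cs hc _)]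
  unfold conv
  rw [← integral_finsetSum _ fun j _ =>
    conv_integrable hf ((hG.pd j).pd j).continuous (pd_cs (pd_cs hc j) j) x]
  congr 1; funext t; rw [Finset.mul_sum]

lemma conv_lap {f G : R3 → ℝ} (hf : Sm f) (hG : Sm G) (hc : HasCompactSupport G) (x : R3) :
    conv (lap f) G x = conv f (lap G) x := by
  rw [← lap_conv hf.continuous hG hc]
  unfold lap
  simp only [pd_conv hf.continuous hG hc, pd_conv hf.continuous (hG.pd _) (pd_cs hc _)]
  simp only [conv_pd hf (hG.pd _) (pd_cs hc _), conv_pd (hf.pd _) hG hc]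
  unfold conv
  rw [← integral_finsetSum _ fun j _ =>
    conv_integrable ((hf.pd j).pd j).continuous hG.continuous hc x]
  congr 1; funext t; rw [Finset.sum_mul]

lemma mvt_seg {h : R3 → ℝ} {D : ℝ} (hh : Sm h) (hD : ∀ i y, 1 / 2 ≤ ‖y‖ → ‖y‖ ≤ 2 → |pd h i y| ≤ D)
    {x q : R3} (hx : 1 ≤ ‖x‖) (hx2 : ‖x‖ ≤ 2) (hq : 1 ≤ ‖q‖) (hq2 : ‖q‖ ≤ 2)
    (hin : 0 ≤ inner ℝ x q) : |h x - h q| ≤ 3 * D * 4 := by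
  have hD0 : 0 ≤ D := (abs_nonneg _).trans (hD 0 x (by linarith) hx2)
  have hb : ∀ y ∈ segment ℝ q x, ‖fderiv ℝ h y‖ ≤ 3 * D := by
    rintro y ⟨s, t, hs, ht, hst, rfl⟩
    have hn : ‖s • q + t • x‖ ^ 2 = s ^ 2 * ‖q‖ ^ 2 + 2 * (s * t * inner ℝ x q) + t ^ 2 * ‖x‖ ^ 2 := by
      rw [norm_add_sq_real, norm_smul, norm_smul, mul_pow, mul_pow, inner_smul_left, inner_smul_right,
        real_inner_comm]
      simp; ring
    have hge : 1 / 2 ≤ ‖s • q + t • x‖ := by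
      have h1 : 0 ≤ s * t * inner ℝ x q := by positivity
      have h2 : s ^ 2 * 1 ≤ s ^ 2 * ‖q‖ ^ 2 := by gcongr; nlinarith
      have h3 : t ^ 2 * 1 ≤ t ^ 2 * ‖x‖ ^ 2 := by gcongr; nlinarith
      have h4 : 1 / 2 ≤ s ^ 2 + t ^ 2 := by nlinarith [sq_nonneg (s - t)]
      nlinarith [norm_nonneg (s • q + t • x)]
    have hle : ‖s • q + t • x‖ ≤ 2 := by
      calc _ ≤ ‖s • q‖ + ‖t • x‖ := norm_add_le _ _
        _ = s * ‖q‖ + t * ‖x‖ := by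
          rw [norm_smul, norm_smul, Real.norm_of_nonneg hs, Real.norm_of_nonneg ht]
        _ ≤ s * 2 + t * 2 := by gcongr
        _ = 2 := by linarith
    set y := s • q + t • x
    refine ContinuousLinearMap.opNorm_le_bound _ (by positivity) fun w => ?_
    have hw : w = ∑ j, w j • (EuclideanSpace.single j (1 : ℝ) : R3) := by
      ext k; fin_cases k <;> simp [Fin.sum_univ_three]
    have hwj : ∀ j, |w j| ≤ ‖w‖ := fun j => by
      simpa using EuclideanSpace.norm_eq w ▸ PiLp.norm_apply_le w j
    conv_lhs => rw [hw]
    rw [map_sum]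
    refine (norm_sum_le _ _).trans ?_
    have : ∀ j ∈ Finset.univ, ‖fderiv ℝ h y (w j • (EuclideanSpace.single j (1 : ℝ) : R3))‖ ≤ D * ‖w‖ := by
      intro j _
      rw [map_smul, norm_smul, mul_comm]
      exact mul_le_mul (hD j y hge hle) (hwj j) (norm_nonneg _) hD0
    refine (Finset.sum_le_sum this).trans ?_
    simp; linarith
  have := (convex_segment q x).norm_image_sub_le_of_norm_fderiv_le (fun y _ => hh.diff y) hb
    (left_mem_segment ℝ q x) (right_mem_segment ℝ q x)
  rw [← Real.norm_eq_abs]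
  refine this.trans ?_
  gcongr
  calc ‖x - q‖ ≤ ‖x‖ + ‖q‖ := norm_sub_le _ _
    _ ≤ 4 := by linarith

lemma osc {h : R3 → ℝ} {D : ℝ} (hh : Sm h) (hD : ∀ i y, 1 / 2 ≤ ‖y‖ → ‖y‖ ≤ 2 → |pd h i y| ≤ D)
    {x : R3} (hx : 1 ≤ ‖x‖) (hx2 : ‖x‖ ≤ 2) :
    |h x - h (EuclideanSpace.single 0 1)| ≤ 24 * D := by
  set p0 : R3 := EuclideanSpace.single 0 1
  obtain ⟨σ, hσ, hσ2⟩ : ∃ σ : ℝ, |σ| = 1 ∧ 0 ≤ x 1 * σ := by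
    rcases le_total 0 (x 1) with h | h
    · exact ⟨1, by simp, by simpa using h⟩
    · exact ⟨-1, by simp, by simpa using h⟩
  set q : R3 := EuclideanSpace.single 1 σ
  have hq : ‖q‖ = 1 := by simp [q, hσ]
  have hp : ‖p0‖ = 1 := by simp [p0]
  have h1 := mvt_seg hh hD hx hx2 hq.ge (by linarith) (by
    simp [q, EuclideanSpace.inner_single_right]; linarith)
  have h2 := mvt_seg hh hD hq.ge (by linarith) hp.ge (by linarith) (by
    simp [q, p0, EuclideanSpace.inner_single_right])
  calc |h x - h p0| = |(h x - h q) + (h q - h p0)| := by ring_nf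
    _ ≤ |h x - h q| + |h q - h p0| := abs_add_le _ _
    _ ≤ 24 * D := by linarith


lemma exists_kernels : ∃ (ρκ : R3 → ℝ) (N0 : ℝ), 0 ≤ N0 ∧ Sm ρκ ∧ (∀ z, ρκ (-z) = ρκ z) ∧
    (∀ z, 1 / 4 < ‖z‖ → ρκ z = 0) ∧ (∫ z, |ρκ z| = N0) ∧
    ∀ ε : ℝ, 0 < ε → ε < 1 / 4 → ∃ G ρε : R3 → ℝ, Sm G ∧ Sm ρε ∧ (∀ z, 1 / 4 < ‖z‖ → G z = 0) ∧
      (∀ z, lap G z = ρκ z - ρε z) ∧ (∫ z, ρε z = 1) ∧ (∫ z, |ρε z| = N0) ∧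
      (∀ z, ε < ‖z‖ → ρε z = 0) := by
  obtain ⟨ρ, Φ, c, hρ, hΦ, hev, hout, hint, hlap, hc⟩ := exists_kernel
  have h3 : Module.finrank ℝ R3 = 3 := by simp
  have sm : ∀ s : ℝ, Sm (fun z => s⁻¹ ^ 3 * ρ (s⁻¹ • z)) := fun s =>
    contDiff_const.mul (hρ.scale s⁻¹)
  have smΦ : ∀ s : ℝ, Sm (fun z => s⁻¹ * Φ (s⁻¹ • z)) := fun s =>
    contDiff_const.mul (hΦ.scale s⁻¹)
  have hnorm : ∀ s : ℝ, 0 < s → ∀ z : R3, ‖s⁻¹ • z‖ = s⁻¹ * ‖z‖ := by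
    intro s hs z
    rw [norm_smul, Real.norm_of_nonneg (by positivity)]
  have out : ∀ s : ℝ, 0 < s → ∀ z : R3, s < ‖z‖ → s⁻¹ ^ 3 * ρ (s⁻¹ • z) = 0 := by
    intro s hs z hz
    rw [hout _ (by rw [hnorm s hs, inv_mul_eq_div, one_lt_div hs]; exact hz), mul_zero]
  have ints : ∀ s : ℝ, 0 < s → ∀ k : R3 → ℝ, ∫ z, s⁻¹ ^ 3 * k (s⁻¹ • z) = ∫ z, k z := by
    intro s hs k
    rw [integral_const_mul, Measure.integral_comp_smul, h3, smul_eq_mul, ← mul_assoc,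
      abs_of_pos (by positivity)]
    field_simp
  have inta : ∀ s : ℝ, 0 < s → ∫ z, |s⁻¹ ^ 3 * ρ (s⁻¹ • z)| = ∫ z, |ρ z| := by
    intro s hs
    rw [← ints s hs (fun z => |ρ z|)]
    congr 1; funext z
    rw [abs_mul, abs_of_pos (by positivity : (0:ℝ) < s⁻¹ ^ 3)]
  have laps : ∀ s : ℝ, 0 < s → ∀ z, lap (fun z => s⁻¹ * Φ (s⁻¹ • z)) z = s⁻¹ ^ 3 * ρ (s⁻¹ • z) := by
    intro s hs z
    have e : ∀ j, pd (fun z => s⁻¹ * Φ (s⁻¹ • z)) j = fun z => s⁻¹ * pd (fun z => Φ (s⁻¹ • z)) j z := by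
      intro j; funext z; exact pd_cmul _ (hΦ.scale _) j z
    have : lap (fun z => s⁻¹ * Φ (s⁻¹ • z)) z = s⁻¹ * lap (fun z => Φ (s⁻¹ • z)) z := by
      unfold lap
      rw [Finset.mul_sum]
      refine Finset.sum_congr rfl fun j _ => ?_
      rw [e j, pd_cmul _ ((hΦ.scale _).pd j)]
    rw [this, lap_scale _ hΦ, hlap]
    ring
  have outΦ : ∀ s : ℝ, 0 < s → ∀ z : R3, s ≤ ‖z‖ → s⁻¹ * Φ (s⁻¹ • z) = c * ‖z‖⁻¹ := by
    intro s hs z hz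
    have hz0 : 0 < ‖z‖ := by linarith
    rw [hc _ (by rw [hnorm s hs, inv_mul_eq_div, one_le_div hs]; exact hz), hnorm s hs]
    field_simp
  refine ⟨fun z => (1 / 4 : ℝ)⁻¹ ^ 3 * ρ ((1 / 4 : ℝ)⁻¹ • z), ∫ z, |ρ z|,
    integral_nonneg fun _ => abs_nonneg _, sm _, ?_, out _ (by norm_num), inta _ (by norm_num), ?_⟩
  · intro z; simp only [smul_neg, hev]
  · intro ε hε hε4
    refine ⟨fun z => (1 / 4 : ℝ)⁻¹ * Φ ((1 / 4 : ℝ)⁻¹ • z) - ε⁻¹ * Φ (ε⁻¹ • z),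
      fun z => ε⁻¹ ^ 3 * ρ (ε⁻¹ • z), (smΦ _).sub (smΦ _), sm ε, ?_, ?_, ?_, inta ε hε, out ε hε⟩
    · intro z hz
      simp only
      rw [outΦ _ (by norm_num) z hz.le, outΦ ε hε z (by linarith), sub_self]
    · intro z
      show _ = (1 / 4 : ℝ)⁻¹ ^ 3 * ρ ((1 / 4 : ℝ)⁻¹ • z) - ε⁻¹ ^ 3 * ρ (ε⁻¹ • z)
      rw [← laps (1 / 4) (by norm_num) z, ← laps ε hε z]
      unfold lap
      rw [← Finset.sum_sub_distrib]
      refine Finset.sum_congr rfl fun j _ => ?_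
      rw [← pd_sub ((smΦ _).pd j) ((smΦ _).pd j)]
      congr 1; funext y
      exact pd_sub (smΦ _) (smΦ _) j y
    · rw [ints ε hε]; exact hint

lemma press_smooth {p f ρκ : R3 → ℝ} {U : Fin 3 → R3 → ℝ} {F : Fin 3 → Fin 3 → R3 → ℝ}
    {ν a b m : ℝ} (hp : Sm p) (hU : ∀ i, Sm (U i)) (hF : ∀ i j, Sm (F i j)) (hf : Sm f)
    (hρ : Sm ρκ) (hev : ∀ z, ρκ (-z) = ρκ z) (hout : ∀ z, 1 / 4 < ‖z‖ → ρκ z = 0)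
    (hfs : ∀ x, f x ≠ 0 → 1 ≤ ‖x‖ ∧ ‖x‖ ≤ 2) (hf0 : ∫ x, f x = 0) (hν : 0 ≤ ν)
    (hm : 0 ≤ m)
    (heq : ∀ i x, pd p i x = ν * lap (U i) x - ∑ j, pd (F i j) j x)
    (hUb : ∀ i x, 1 / 4 ≤ ‖x‖ → ‖x‖ ≤ 3 → |U i x| ≤ a)
    (hFb : ∀ i j x, 1 / 4 ≤ ‖x‖ → ‖x‖ ≤ 3 → |F i j x| ≤ b) (hfm : ∀ x, |f x| ≤ m) :
    |∫ x, p x * conv f ρκ x| ≤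
      m * (24 * (ν * (a * ∫ z, |lap ρκ z|) + b * ∑ j, ∫ z, |pd ρκ j z|)) * V3 := by
  have hfc : HasCompactSupport f := cs_of_out (r := 2) fun z hz => by
    by_contra h; linarith [(hfs z h).2]
  have hρc : HasCompactSupport ρκ := cs_of_out hout
  rw [fubini_conv hp.continuous hf.continuous hρ.continuous hfc hρc hev]
  set h := conv p ρκ with hh
  have hsm : Sm h := conv_sm hp.continuous hρ hρc
  set D := ν * (a * ∫ z, |lap ρκ z|) + b * ∑ j, ∫ z, |pd ρκ j z| with hD
  have hmem : ∀ y : R3, 1 / 2 ≤ ‖y‖ → ‖y‖ ≤ 2 → ∀ t : R3, ‖y - t‖ ≤ 1 / 4 → 1 / 4 ≤ ‖t‖ ∧ ‖t‖ ≤ 3 := by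
    intro y h1 h2 t ht
    have e1 := abs_norm_sub_norm_le y t
    have e2 := abs_le.1 (e1.trans ht)
    constructor <;> linarith [e2.1, e2.2]
  have hpd : ∀ i y, 1 / 2 ≤ ‖y‖ → ‖y‖ ≤ 2 → |pd h i y| ≤ D := by
    intro i y h1 h2
    rw [hh, pd_conv hp.continuous hρ hρc, conv_pd hp hρ hρc,
      conv_lin (hU i).lap.continuous (fun j => ((hF i j).pd j).continuous) hρ.continuous hρc
        (fun x => heq i x) y, conv_lap (hU i) hρ hρc]
    simp only [← conv_pd (hF i _) hρ hρc]
    have b1 : |conv (U i) (lap ρκ) y| ≤ a * ∫ z, |lap ρκ z| :=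
      conv_bound hρ.lap.continuous (cs_of_out (lap_zero_out hout)) (lap_zero_out hout)
        fun t ht => hUb i t (hmem y h1 h2 t ht).1 (hmem y h1 h2 t ht).2
    have b2 : ∀ j, |conv (F i j) (pd ρκ j) y| ≤ b * ∫ z, |pd ρκ j z| := fun j =>
      conv_bound (hρ.pd j).continuous (pd_cs hρc j) (pd_zero_out hout j)
        fun t ht => hFb i j t (hmem y h1 h2 t ht).1 (hmem y h1 h2 t ht).2
    refine (abs_sub _ _).trans ?_
    rw [abs_mul, abs_of_nonneg hν, hD, Finset.mul_sum]
    refine add_le_add (mul_le_mul_of_nonneg_left b1 hν) ?_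
    exact (Finset.abs_sum_le_sum_abs _ _).trans (Finset.sum_le_sum fun j _ => b2 j)
  set h0 := h (EuclideanSpace.single 0 1)
  have hD0 : 0 ≤ D := by
    refine (abs_nonneg _).trans (hpd 0 (EuclideanSpace.single 0 1) ?_ ?_) <;> simp <;> norm_num
  have e : ∫ x, f x * h x = ∫ x, f x * (h x - h0) := by
    have e1 : ∀ x, f x * (h x - h0) = f x * h x - f x * h0 := fun x => by ring
    simp only [e1]
    have i1 : Integrable fun x => f x * h x := cs_int (hf.continuous.mul hsm.continuous) hfc.mul_right
    have i2 : Integrable fun x => f x * h0 := (cs_int hf.continuous hfc).mul_const _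
    rw [integral_sub i1 i2, integral_mul_const, hf0]
    simp
  rw [e]
  refine int_bound (fun x hx => ?_) fun x => ?_
  · have : f x = 0 := by by_contra h; linarith [(hfs x h).2]
    rw [this, zero_mul]
  · by_cases hx : f x = 0
    · rw [hx]; simp; positivity
    · rw [abs_mul]
      exact mul_le_mul (hfm x) (osc hsm hpd (hfs x hx).1 (hfs x hx).2) (abs_nonneg _) hm

lemma press_sing {p f G : R3 → ℝ} {U : Fin 3 → R3 → ℝ} {F : Fin 3 → Fin 3 → R3 → ℝ}
    {ν b m N : ℝ} (hp : Sm p) (hU : ∀ i, Sm (U i)) (hF : ∀ i j, Sm (F i j)) (hf : Sm f)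
    (hG : Sm G) (hout : ∀ z, 1 / 4 < ‖z‖ → G z = 0)
    (hfs : ∀ x, f x ≠ 0 → 1 ≤ ‖x‖ ∧ ‖x‖ ≤ 2)
    (hm : 0 < m) (hb : 0 ≤ b)
    (heq : ∀ i x, pd p i x = ν * lap (U i) x - ∑ j, pd (F i j) j x)
    (hdiv : ∀ x, ∑ j, pd (U j) j x = 0)
    (hFb : ∀ i j x, 1 / 4 ≤ ‖x‖ → ‖x‖ ≤ 3 → |F i j x| ≤ b)
    (hN : ∀ x, |conv f (lap G) x| ≤ N * m) :
    |∫ x, p x * conv f (lap G) x| ≤ b * m * ((9 + N ^ 2) / 2 * V3) := by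
  have hGc : HasCompactSupport G := cs_of_out hout
  set g := conv f G with hg
  have hgs : Sm g := conv_sm hf.continuous hG hGc
  have hzero : ∀ K : R3 → ℝ, (∀ z, 1 / 4 < ‖z‖ → K z = 0) → ∀ x, conv f K x ≠ 0 →
      1 / 4 ≤ ‖x‖ ∧ ‖x‖ ≤ 3 := by
    intro K hK x hx
    by_contra hcon
    apply hx
    refine conv_zero hK fun y hy => ?_
    by_contra hfy
    obtain ⟨h1, h2⟩ := hfs y hfy
    have e2 := abs_le.1 ((abs_norm_sub_norm_le x y).trans hy)
    exact hcon ⟨by linarith [e2.1], by linarith [e2.2]⟩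
  have hz3 : ∀ K : R3 → ℝ, (∀ z, 1 / 4 < ‖z‖ → K z = 0) → ∀ x, 3 < ‖x‖ → conv f K x = 0 := by
    intro K hK x hx
    by_contra h
    linarith [(hzero K hK x h).2]
  have hgc : HasCompactSupport g := cs_of_out (hz3 G hout)
  have hg2 : ∀ i j, pd (pd g i) j = conv f (pd (pd G i) j) := by
    intro i j
    rw [hg, pd_conv hf.continuous hG hGc, pd_conv hf.continuous (hG.pd i) (pd_cs hGc i)]
  have hgl : ∀ x, lap g x = conv f (lap G) x := lap_conv hf.continuous hG hGc
  simp only [← hgl]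
  have I1 : ∀ {k w : R3 → ℝ}, Sm k → Sm w → HasCompactSupport w → Integrable (fun x => k x * w x) :=
    fun hk hw hc => cs_int (hk.mul' hw).continuous hc.mul_left
  have id1 : ∫ x, p x * lap g x = - ∑ i, ∑ j, ∫ x, F i j x * pd (pd g i) j x := by
    have s1 : ∫ x, p x * lap g x = - ∑ i, ∫ x, pd p i x * pd g i x := by
      unfold lap
      simp only [Finset.mul_sum]
      rw [integral_finsetSum _ fun i _ => I1 hp ((hgs.pd i).pd i) (pd_cs (pd_cs hgc i) i),
        ← Finset.sum_neg_distrib]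
      exact Finset.sum_congr rfl fun i _ => ibp hp (hgs.pd i) (pd_cs hgc i) i
    have s2 : ∀ i, ∫ x, pd p i x * pd g i x
        = ν * (∫ x, lap (U i) x * pd g i x) + ∑ j, ∫ x, F i j x * pd (pd g i) j x := by
      intro i
      have e : ∀ x, pd p i x * pd g i x
          = ν * (lap (U i) x * pd g i x) - ∑ j, pd (F i j) j x * pd g i x := by
        intro x; rw [heq, sub_mul, Finset.sum_mul]; ring
      simp only [e]
      rw [integral_sub ((I1 (hU i).lap (hgs.pd i) (pd_cs hgc i)).const_mul _)
        (integrable_finsetSum _ fun j _ => I1 ((hF i j).pd j) (hgs.pd i) (pd_cs hgc i)),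
        integral_const_mul,
        integral_finsetSum _ fun j _ => I1 ((hF i j).pd j) (hgs.pd i) (pd_cs hgc i), sub_eq_add_neg,
        ← Finset.sum_neg_distrib]
      congr 1
      exact Finset.sum_congr rfl fun j _ => (ibp (hF i j) (hgs.pd i) (pd_cs hgc i) j).symm
    have s3 : ∑ i, ∫ x, lap (U i) x * pd g i x = 0 := by
      have t1 : ∀ i, ∫ x, lap (U i) x * pd g i x = -∑ j, ∫ x, pd (U i) i x * pd (pd g j) j x := by
        intro i
        unfold lap
        simp only [Finset.sum_mul]
        rw [integral_finsetSum _ fun j _ => I1 (((hU i).pd j).pd j) (hgs.pd i) (pd_cs hgc i),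
          ← Finset.sum_neg_distrib]
        refine Finset.sum_congr rfl fun j _ => ?_
        have r1 := ibp ((hU i).pd j) (hgs.pd i) (pd_cs hgc i) j
        have r2 := ibp (hU i) ((hgs.pd i).pd j) (pd_cs (pd_cs hgc i) j) j
        have r3 := ibp (hU i) ((hgs.pd j).pd j) (pd_cs (pd_cs hgc j) j) i
        have r4 : ∀ x, pd (pd (pd g i) j) j x = pd (pd (pd g j) j) i x := by
          intro x
          have : pd (pd g i) j = pd (pd g j) i := by funext y; exact pd_comm hgs i j y
          rw [this]
          exact pd_comm (hgs.pd j) i j x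
        simp only [r4] at r2
        linarith
      have t2 : ∀ x, ∑ i, ∑ j, pd (U i) i x * pd (pd g j) j x = 0 := by
        intro x
        simp only [← Finset.mul_sum]
        rw [← Finset.sum_mul, hdiv, zero_mul]
      have I2 : ∀ i j, Integrable fun x => pd (U i) i x * pd (pd g j) j x := fun i j =>
        I1 ((hU i).pd i) ((hgs.pd j).pd j) (pd_cs (pd_cs hgc j) j)
      calc ∑ i, ∫ x, lap (U i) x * pd g i x = -∑ i, ∑ j, ∫ x, pd (U i) i x * pd (pd g j) j x := by
            rw [← Finset.sum_neg_distrib]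
            exact Finset.sum_congr rfl fun i _ => t1 i
        _ = -∫ x, ∑ i, ∑ j, pd (U i) i x * pd (pd g j) j x := by
            rw [integral_finsetSum _ fun i _ => integrable_finsetSum _ fun j _ => I2 i j]
            congr 1
            exact Finset.sum_congr rfl fun i _ => (integral_finsetSum _ fun j _ => I2 i j).symm
        _ = 0 := by simp [t2]
    rw [s1]
    simp only [s2]
    rw [Finset.sum_add_distrib, ← Finset.mul_sum, s3]
    simp
  rw [id1, abs_neg]
  have bd : ∀ i j, |∫ x, F i j x * pd (pd g i) j x|
      ≤ b / 2 * (m * V3 + m⁻¹ * ∫ x, (pd (pd g i) j x) ^ 2) := by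
    intro i j
    refine int_amgm hm hb (fun x hx => ?_) ((hgs.pd i).pd j).continuous ?_
    · rw [hg2] at hx
      have := hzero _ (pd_zero_out (pd_zero_out hout i) j) x hx
      exact hFb i j x this.1 this.2
    · rw [hg2]; exact hz3 _ (pd_zero_out (pd_zero_out hout i) j)
  have hl : ∫ x, (lap g x) ^ 2 ≤ (N * m) ^ 2 * V3 := by
    refine (le_abs_self _).trans (int_bound (fun x hx => ?_) fun x => ?_)
    · rw [hgl, hz3 _ (lap_zero_out hout) x hx]; simp
    · rw [abs_pow, hgl]
      exact pow_le_pow_left₀ (abs_nonneg _) (hN x) 2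
  calc |∑ i, ∑ j, ∫ x, F i j x * pd (pd g i) j x|
      ≤ ∑ i, ∑ j, |∫ x, F i j x * pd (pd g i) j x| :=
        (Finset.abs_sum_le_sum_abs _ _).trans
          (Finset.sum_le_sum fun i _ => Finset.abs_sum_le_sum_abs _ _)
    _ ≤ ∑ i : Fin 3, ∑ j : Fin 3, b / 2 * (m * V3 + m⁻¹ * ∫ x, (pd (pd g i) j x) ^ 2) :=
        Finset.sum_le_sum fun i _ => Finset.sum_le_sum fun j _ => bd i j
    _ = b / 2 * (9 * (m * V3) + m⁻¹ * ∫ x, (lap g x) ^ 2) := by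
        rw [← hess_l2 hgs hgc]
        simp only [Fin.sum_univ_three]; ring
    _ ≤ b / 2 * (9 * (m * V3) + m⁻¹ * ((N * m) ^ 2 * V3)) := by gcongr
    _ = b * m * ((9 + N ^ 2) / 2 * V3) := by field_simp

lemma press_lim {p f : R3 → ℝ} (hp : Sm p) (hf : Sm f) 
    (hfs : ∀ x, f x ≠ 0 → 1 ≤ ‖x‖ ∧ ‖x‖ ≤ 2) {N0 : ℝ} (hN0 : 0 ≤ N0) :
    ∃ C : ℝ, 0 ≤ C ∧ ∀ (ε : ℝ) (ρε : R3 → ℝ), 0 < ε → ε < 1 / 4 → Sm ρε → (∫ z, ρε z = 1) →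
      (∫ z, |ρε z| = N0) → (∀ z, ε < ‖z‖ → ρε z = 0) →
      |∫ x, p x * (conv f ρε x - f x)| ≤ C * ε := by
  have hfc : HasCompactSupport f := cs_of_out (r := 2) fun z hz => by
    by_contra h; linarith [(hfs z h).2]
  have h1 : ContDiff ℝ 1 f := hf.of_le (by exact_mod_cast le_top)
  obtain ⟨L, hL⟩ := ContDiff.lipschitzWith_of_hasCompactSupport hfc h1 one_ne_zero
  obtain ⟨P, hP⟩ := (isCompact_closedBall (0 : R3) 3).exists_bound_of_continuousOn
    hp.continuous.continuousOn
  have hP0 : 0 ≤ P := (norm_nonneg _).trans (hP 0 (by simp))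
  refine ⟨P * (L * N0) * V3, by have := V3_nonneg; positivity, ?_⟩
  intro ε ρε hε hε4 hρ hi hia hout
  have hc := cs_of_out hout
  have hdiff : ∀ x, |conv f ρε x - f x| ≤ (L * ε) * N0 := by
    intro x
    have e : conv f ρε x - f x = conv (fun t => f t - f x) ρε x := by
      unfold conv
      have e1 : ∀ t, (f t - f x) * ρε (x - t) = f t * ρε (x - t) - f x * ρε (x - t) := fun t => by ring
      simp only [e1]
      rw [integral_sub (conv_integrable hf.continuous hρ.continuous hc x)
        (conv_integrable continuous_const hρ.continuous hc x), integral_const_mul,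
        integral_sub_left_eq_self (fun z => ρε z) volume x, hi, mul_one]
    rw [e, ← hia]
    refine conv_bound hρ.continuous hc hout fun y hy => ?_
    have := hL.dist_le_mul y x
    rw [Real.dist_eq, dist_comm, dist_eq_norm] at this
    exact this.trans (by gcongr)
  have hzero : ∀ x, 3 < ‖x‖ → conv f ρε x - f x = 0 := by
    intro x hx
    have a1 : f x = 0 := by by_contra h; linarith [(hfs x h).2]
    have a2 : conv f ρε x = 0 := by
      refine conv_zero hout fun y hy => ?_
      by_contra h
      have := (hfs y h).2
      have e2 := abs_le.1 ((abs_norm_sub_norm_le x y).trans hy)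
      linarith [e2.2]
    rw [a1, a2, sub_zero]
  have := int_bound (k := fun x => p x * (conv f ρε x - f x)) (c := P * ((L * ε) * N0))
    (fun x hx => by rw [hzero x hx, mul_zero]) (fun x => by
      rw [abs_mul]
      by_cases hx : ‖x‖ ≤ 3
      · exact mul_le_mul (hP x (by simpa using hx)) (hdiff x) (abs_nonneg _) hP0
      · rw [hzero x (not_le.1 hx)]; simp; positivity)
  refine this.trans (le_of_eq (by ring))

lemma pressure : ∃ C : ℝ, 0 < C ∧ ∀ (p f : R3 → ℝ) (U : Fin 3 → R3 → ℝ) (F : Fin 3 → Fin 3 → R3 → ℝ)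
    (ν a b m : ℝ), Sm p → (∀ i, Sm (U i)) → (∀ i j, Sm (F i j)) → Sm f →
    (∀ x, f x ≠ 0 → 1 ≤ ‖x‖ ∧ ‖x‖ ≤ 2) → (∫ x, f x = 0) → 0 ≤ ν → 0 < m → 0 ≤ a → 0 ≤ b →
    (∀ i x, pd p i x = ν * lap (U i) x - ∑ j, pd (F i j) j x) →
    (∀ x, ∑ j, pd (U j) j x = 0) →
    (∀ i x, 1 / 4 ≤ ‖x‖ → ‖x‖ ≤ 3 → |U i x| ≤ a) →
    (∀ i j x, 1 / 4 ≤ ‖x‖ → ‖x‖ ≤ 3 → |F i j x| ≤ b) → (∀ x, |f x| ≤ m) →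
    |∫ x, p x * f x| ≤ C * (m * (b + ν * a)) := by
  obtain ⟨ρκ, N0, hN0, hρ, hev, hout, hκ, hker⟩ := exists_kernels
  set A1 := ∫ z, |lap ρκ z| with hA1
  set A2 := ∑ j, ∫ z, |pd ρκ j z| with hA2
  have hA10 : 0 ≤ A1 := integral_nonneg fun _ => abs_nonneg _
  have hA20 : 0 ≤ A2 := Finset.sum_nonneg fun j _ => integral_nonneg fun _ => abs_nonneg _
  have hV := V3_nonneg
  set C1 := 24 * (A1 + A2) * V3 with hC1
  set C2 := (9 + (2 * N0) ^ 2) / 2 * V3 with hC2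
  have hC10 : 0 ≤ C1 := by positivity
  have hC20 : 0 ≤ C2 := by positivity
  refine ⟨C1 + C2 + 1, by positivity, ?_⟩
  intro p f U F ν a b m hp hU hF hf hfs hf0 hν hm ha hb heq hdiv hUb hFb hfm
  have hfc : HasCompactSupport f := cs_of_out (r := 2) fun z hz => by
    by_contra h; linarith [(hfs z h).2]
  obtain ⟨C, hC0, hC⟩ := press_lim hp hf hfs hN0
  have X := press_smooth hp hU hF hf hρ hev hout hfs hf0 hν hm.le heq hUb hFb hfm
  rw [← hA1, ← hA2] at X
  have X' : m * (24 * (ν * (a * A1) + b * A2)) * V3 ≤ C1 * (m * (b + ν * a)) := by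
    have : C1 * (m * (b + ν * a)) - m * (24 * (ν * (a * A1) + b * A2)) * V3
      = 24 * m * V3 * (A1 * b + A2 * (ν * a)) := by rw [hC1]; ring
    have h2 : 0 ≤ 24 * m * V3 * (A1 * b + A2 * (ν * a)) := by positivity
    linarith
  have Y' : b * m * C2 ≤ C2 * (m * (b + ν * a)) := by
    have : C2 * (m * (b + ν * a)) - b * m * C2 = C2 * m * (ν * a) := by ring
    have h2 : 0 ≤ C2 * m * (ν * a) := by positivity
    linarith
  have main : ∀ ε : ℝ, 0 < ε → ε < 1 / 4 →
      |∫ x, p x * f x| ≤ (C1 + C2) * (m * (b + ν * a)) + C * ε := by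
    intro ε hε hε4
    obtain ⟨G, ρε, hG, hρε, hGout, hlap, hi, hia, hεout⟩ := hker ε hε hε4
    have Z := hC ε ρε hε hε4 hρε hi hia hεout
    have hεc := cs_of_out hεout
    have hκc := cs_of_out hout
    have hsplit : ∀ x, conv f (lap G) x = conv f ρκ x - conv f ρε x := by
      intro x
      unfold conv
      rw [← integral_sub (conv_integrable hf.continuous hρ.continuous hκc x)
        (conv_integrable hf.continuous hρε.continuous hεc x)]
      congr 1; funext t; rw [hlap]; ring
    have hN : ∀ x, |conv f (lap G) x| ≤ (2 * N0) * m := by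
      intro x
      rw [hsplit]
      have b1 := conv_bound (x := x) hρ.continuous hκc hout fun y _ => hfm y
      have b2 := conv_bound (x := x) hρε.continuous hεc hεout fun y _ => hfm y
      rw [hκ] at b1
      rw [hia] at b2
      have := abs_sub (conv f ρκ x) (conv f ρε x)
      linarith
    have Y := press_sing hp hU hF hf hG hGout hfs hm hb heq hdiv hFb hN
    have cz : ∀ (K : R3 → ℝ) (r : ℝ), r ≤ 1 / 4 → (∀ z, r < ‖z‖ → K z = 0) → HasCompactSupport (conv f K) := by
      intro K r hr hK
      refine cs_of_out (r := 3) fun x hx => conv_zero hK fun y hy => ?_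
      by_contra h
      have := (hfs y h).2
      have e2 := abs_le.1 ((abs_norm_sub_norm_le x y).trans hy)
      linarith [e2.2]
    have iκ : Integrable fun x => p x * conv f ρκ x :=
      cs_int (hp.continuous.mul (conv_sm hf.continuous hρ hκc).continuous) (cz ρκ _ le_rfl hout).mul_left
    have iε : Integrable fun x => p x * conv f ρε x :=
      cs_int (hp.continuous.mul (conv_sm hf.continuous hρε hεc).continuous)
        (cz ρε _ hε4.le hεout).mul_left
    have iF : Integrable fun x => p x * f x := cs_int (hp.continuous.mul hf.continuous) hfc.mul_left
    have e1 : ∫ x, p x * conv f (lap G) x = (∫ x, p x * conv f ρκ x) - ∫ x, p x * conv f ρε x := by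
      rw [← integral_sub iκ iε]; congr 1; funext x; rw [hsplit]; ring
    have e2 : ∫ x, p x * (conv f ρε x - f x) = (∫ x, p x * conv f ρε x) - ∫ x, p x * f x := by
      rw [← integral_sub iε iF]; congr 1; funext x; ring
    rw [e1] at Y
    rw [← hC2] at Y
    rw [e2] at Z
    have := abs_le.1 X; have := abs_le.1 Y; have := abs_le.1 Z
    rw [abs_le]
    constructor <;> linarith
  have hfin : |∫ x, p x * f x| ≤ (C1 + C2) * (m * (b + ν * a)) := by
    refine le_of_forall_pos_le_add fun δ hδ => ?_
    have hpos : 0 < min (1 / 8) (δ / (C + 1)) := lt_min (by norm_num) (by positivity)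
    refine (main (min (1 / 8) (δ / (C + 1))) hpos
      (lt_of_le_of_lt (min_le_left _ _) (by norm_num))).trans ?_
    have : C * min (1 / 8) (δ / (C + 1)) ≤ δ := by
      calc C * min (1 / 8) (δ / (C + 1)) ≤ (C + 1) * (δ / (C + 1)) := by
            gcongr
            · linarith
            · exact min_le_right _ _
        _ = δ := by field_simp
    linarith
  have : 0 ≤ m * (b + ν * a) := by positivity
  linarith


lemma pd_sq {h : R3 → ℝ} (hh : Sm h) (j : Fin 3) (x : R3) :
    pd (fun y => h y ^ 2) j x = 2 * (h x * pd h j x) := by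
  have : (fun y => h y ^ 2) = fun y => h y * h y := by funext y; ring
  rw [this, pd_mul hh hh]; ring

lemma Sm.sq' {h : R3 → ℝ} (hh : Sm h) : Sm (fun y => h y ^ 2) := ContDiff.pow hh 2

lemma lap_sq {h : R3 → ℝ} (hh : Sm h) (x : R3) :
    lap (fun y => h y ^ 2) x = 2 * ∑ j, pd h j x ^ 2 + 2 * (h x * lap h x) := by
  unfold lap
  have : ∀ j, pd (fun y => h y ^ 2) j = fun y => 2 * (h y * pd h j y) := by
    intro j; funext y; exact pd_sq hh j y
  simp only [this, pd_cmul 2 (hh.mul' (hh.pd _)), pd_mul hh (hh.pd _)]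
  simp only [Fin.sum_univ_three]; ring

lemma lap_add {f g : R3 → ℝ} (hf : Sm f) (hg : Sm g) (x : R3) :
    lap (fun y => f y + g y) x = lap f x + lap g x := by
  unfold lap
  have : ∀ j, pd (fun y => f y + g y) j = fun y => pd f j y + pd g j y := by
    intro j; funext y; exact pd_add hf hg j y
  simp only [this, pd_add (hf.pd _) (hg.pd _), Finset.sum_add_distrib]

lemma lap_sum {f : Fin 3 → R3 → ℝ} (hf : ∀ i, Sm (f i)) (x : R3) :
    lap (fun y => ∑ i, f i y) x = ∑ i, lap (f i) x := by
  unfold lap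
  have : ∀ j, pd (fun y => ∑ i, f i y) j = fun y => ∑ i, pd (f i) j y := by
    intro j; funext y; exact pd_sum _ hf j y
  simp only [this, pd_sum _ (fun i => (hf i).pd _)]
  exact Finset.sum_comm

def Eng (U V : Fin 3 → R3 → ℝ) (Θ : R3 → ℝ) (x : R3) : ℝ :=
  (∑ i, U i x ^ 2 + ∑ i, V i x ^ 2) + Θ x ^ 2

def Dis (U V : Fin 3 → R3 → ℝ) (Θ : R3 → ℝ) (x : R3) : ℝ :=
  (∑ i, ∑ j, pd (U i) j x ^ 2 + ∑ i, ∑ j, pd (V i) j x ^ 2) + ∑ j, pd Θ j x ^ 2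

def Dot (U V : Fin 3 → R3 → ℝ) (x : R3) : ℝ := ∑ i, U i x * V i x

structure Sys (ν : ℝ) (U V : Fin 3 → R3 → ℝ) (Θ p : R3 → ℝ) : Prop where
  hU : ∀ i, Sm (U i)
  hV : ∀ i, Sm (V i)
  hT : Sm Θ
  hp : Sm p
  e1 : ∀ i x, -(ν * lap (U i) x) + (∑ j, U j x * pd (U i) j x) + pd p i x
    + (∑ j, pd (fun y => V j y * V i y) j x) = 0
  e2 : ∀ i x, -(ν * lap (V i) x) + (∑ j, U j x * pd (V i) j x) + pd Θ i x
    + (∑ j, V j x * pd (U i) j x) = 0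
  e3 : ∀ x, -(ν * lap Θ x) + (∑ j, U j x * pd Θ j x) + (∑ j, pd (V j) j x) = 0
  e4 : ∀ x, (∑ j, pd (U j) j x) = 0

section
variable {ν : ℝ} {U V : Fin 3 → R3 → ℝ} {Θ p : R3 → ℝ}

lemma Sys.eng_sm (h : Sys ν U V Θ p) : Sm (Eng U V Θ) :=
  ((ContDiff.sum fun i _ => (h.hU i).sq').add (ContDiff.sum fun i _ => (h.hV i).sq')).add h.hT.sq'

lemma Sys.dot_sm (h : Sys ν U V Θ p) : Sm (Dot U V) :=
  ContDiff.sum fun i _ => (h.hU i).mul' (h.hV i)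

lemma Sys.dis_sm (h : Sys ν U V Θ p) : Sm (Dis U V Θ) :=
  ((ContDiff.sum fun i _ => ContDiff.sum fun j _ => ((h.hU i).pd j).sq').add
    (ContDiff.sum fun i _ => ContDiff.sum fun j _ => ((h.hV i).pd j).sq')).add
    (ContDiff.sum fun j _ => (h.hT.pd j).sq')

lemma Sys.pd_eng (h : Sys ν U V Θ p) (j : Fin 3) (x : R3) :
    pd (Eng U V Θ) j x = 2 * (∑ i, U i x * pd (U i) j x + ∑ i, V i x * pd (V i) j x + Θ x * pd Θ j x) := by
  have s1 : Sm fun x => ∑ i, U i x ^ 2 := ContDiff.sum fun i _ => (h.hU i).sq'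
  have s2 : Sm fun x => ∑ i, V i x ^ 2 := ContDiff.sum fun i _ => (h.hV i).sq'
  have : Eng U V Θ = fun x => (∑ i, U i x ^ 2 + ∑ i, V i x ^ 2) + Θ x ^ 2 := rfl
  rw [this, pd_add (s1.add s2) h.hT.sq', pd_add s1 s2, pd_sum _ fun i => (h.hU i).sq',
    pd_sum _ fun i => (h.hV i).sq', pd_sq h.hT]
  simp only [pd_sq (h.hU _), pd_sq (h.hV _), ← Finset.mul_sum]
  ring

lemma Sys.lap_eng (h : Sys ν U V Θ p) (x : R3) :
    lap (Eng U V Θ) x = 2 * Dis U V Θ x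
      + 2 * (∑ i, U i x * lap (U i) x + ∑ i, V i x * lap (V i) x + Θ x * lap Θ x) := by
  have s1 : Sm fun x => ∑ i, U i x ^ 2 := ContDiff.sum fun i _ => (h.hU i).sq'
  have s2 : Sm fun x => ∑ i, V i x ^ 2 := ContDiff.sum fun i _ => (h.hV i).sq'
  have : Eng U V Θ = fun x => (∑ i, U i x ^ 2 + ∑ i, V i x ^ 2) + Θ x ^ 2 := rfl
  rw [this, lap_add (s1.add s2) h.hT.sq', lap_add s1 s2, lap_sum fun i => (h.hU i).sq',
    lap_sum fun i => (h.hV i).sq', lap_sq h.hT]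
  simp only [lap_sq (h.hU _), lap_sq (h.hV _), Finset.sum_add_distrib, ← Finset.mul_sum, Dis]
  ring

lemma Sys.pd_dot (h : Sys ν U V Θ p) (j : Fin 3) (x : R3) :
    pd (Dot U V) j x = ∑ i, pd (U i) j x * V i x + ∑ i, U i x * pd (V i) j x := by
  have : Dot U V = fun x => ∑ i, U i x * V i x := rfl
  rw [this, pd_sum _ fun i => (h.hU i).mul' (h.hV i)]
  simp only [pd_mul (h.hU _) (h.hV _), Finset.sum_add_distrib]

def Flux (U V : Fin 3 → R3 → ℝ) (Θ : R3 → ℝ) (j : Fin 3) (x : R3) : ℝ :=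
  (1 / 2 * (Eng U V Θ x * U j x) + Dot U V x * V j x) + Θ x * V j x

lemma Sys.flux_sm (h : Sys ν U V Θ p) (j : Fin 3) : Sm (Flux U V Θ j) :=
  ((contDiff_const.mul (h.eng_sm.mul' (h.hU j))).add (h.dot_sm.mul' (h.hV j))).add
    (h.hT.mul' (h.hV j))

lemma Sys.pd_flux (h : Sys ν U V Θ p) (j : Fin 3) (x : R3) :
    pd (Flux U V Θ j) j x = 1 / 2 * (pd (Eng U V Θ) j x * U j x + Eng U V Θ x * pd (U j) j x)
      + (pd (Dot U V) j x * V j x + Dot U V x * pd (V j) j x)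
      + (pd Θ j x * V j x + Θ x * pd (V j) j x) := by
  have : Flux U V Θ j = fun x => (1 / 2 * (Eng U V Θ x * U j x) + Dot U V x * V j x) + Θ x * V j x := rfl
  have s1 : Sm fun x => 1 / 2 * (Eng U V Θ x * U j x) := contDiff_const.mul (h.eng_sm.mul' (h.hU j))
  rw [this, pd_add (s1.add (h.dot_sm.mul' (h.hV j))) (h.hT.mul' (h.hV j)),
    pd_add s1 (h.dot_sm.mul' (h.hV j)), pd_cmul _ (h.eng_sm.mul' (h.hU j)),
    pd_mul h.eng_sm (h.hU j), pd_mul h.dot_sm (h.hV j), pd_mul h.hT (h.hV j)]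

lemma Sys.pt (h : Sys ν U V Θ p) (x : R3) :
    ν * Dis U V Θ x = ν / 2 * lap (Eng U V Θ) x - ∑ j, pd (Flux U V Θ j) j x
      - ∑ j, U j x * pd p j x := by
  rw [h.lap_eng]
  simp only [h.pd_flux, h.pd_eng, h.pd_dot]
  have e1 := fun i => h.e1 i x
  have e2 := fun i => h.e2 i x
  have e3 := h.e3 x
  have e4 := h.e4 x
  simp only [pd_mul (h.hV _) (h.hV _)] at e1
  simp only [Fin.sum_univ_three, Dot] at *
  linear_combination U 0 x * e1 0 + U 1 x * e1 1 + U 2 x * e1 2 + V 0 x * e2 0 + V 1 x * e2 1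
    + V 2 x * e2 2 + Θ x * e3 + 1 / 2 * Eng U V Θ x * e4

lemma green {φ E : R3 → ℝ} (hφ : Sm φ) (hc : HasCompactSupport φ) (hE : Sm E) :
    ∫ x, φ x * lap E x = ∫ x, E x * lap φ x := by
  unfold lap
  simp only [Finset.mul_sum]
  rw [integral_finsetSum _ fun i _ => cs_int (hφ.mul' ((hE.pd i).pd i)).continuous hc.mul_right,
    integral_finsetSum _ fun i _ => cs_int (hE.mul' ((hφ.pd i).pd i)).continuous
      (pd_cs (pd_cs hc i) i).mul_left]
  refine Finset.sum_congr rfl fun j _ => ?_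
  rw [ibp hE (hφ.pd j) (pd_cs hc j), ibp (hE.pd j) hφ hc, neg_neg]
  simp only [mul_comm]

lemma div_ibp {φ : R3 → ℝ} {K : Fin 3 → R3 → ℝ} (hφ : Sm φ) (hc : HasCompactSupport φ)
    (hK : ∀ j, Sm (K j)) :
    ∫ x, φ x * ∑ j, pd (K j) j x = - ∫ x, ∑ j, K j x * pd φ j x := by
  simp only [Finset.mul_sum]
  rw [integral_finsetSum _ fun i _ => cs_int (hφ.mul' ((hK i).pd i)).continuous hc.mul_right,
    integral_finsetSum _ fun i _ => cs_int ((hK i).mul' (hφ.pd i)).continuous (pd_cs hc i).mul_left,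
    ← Finset.sum_neg_distrib]
  refine Finset.sum_congr rfl fun j _ => ?_
  rw [ibp (hK j) hφ hc, neg_neg]
  simp only [mul_comm]

lemma Sys.energy (h : Sys ν U V Θ p) {φ : R3 → ℝ} (hφ : Sm φ) (hc : HasCompactSupport φ) :
    ν * ∫ x, φ x * Dis U V Θ x = ν / 2 * (∫ x, Eng U V Θ x * lap φ x)
      + (∫ x, ∑ j, Flux U V Θ j x * pd φ j x) + ∫ x, p x * ∑ j, U j x * pd φ j x := by
  have g := green hφ hc h.eng_sm
  have d1 := div_ibp hφ hc h.flux_sm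
  have d2 := div_ibp (K := fun j x => p x * U j x) hφ hc fun j => h.hp.mul' (h.hU j)
  have c1 : ∀ x, ∑ j, pd (fun x => p x * U j x) j x = ∑ j, U j x * pd p j x := by
    intro x
    have := h.e4 x
    simp only [pd_mul h.hp (h.hU _), Fin.sum_univ_three] at *
    linear_combination p x * this
  have c2 : ∀ x, ∑ j, p x * U j x * pd φ j x = p x * ∑ j, U j x * pd φ j x := by
    intro x; rw [Finset.mul_sum]; simp only [mul_assoc]
  simp only [c1, c2] at d2
  have i1 : Integrable fun x => φ x * lap (Eng U V Θ) x :=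
    cs_int (hφ.mul' h.eng_sm.lap).continuous hc.mul_right
  have i2 : Integrable fun x => φ x * ∑ j, pd (Flux U V Θ j) j x :=
    cs_int (hφ.mul' (ContDiff.sum fun j _ => (h.flux_sm j).pd j)).continuous hc.mul_right
  have i3 : Integrable fun x => φ x * ∑ j, U j x * pd p j x :=
    cs_int (hφ.mul' (ContDiff.sum fun j _ => (h.hU j).mul' (h.hp.pd j))).continuous hc.mul_right
  have : ν * ∫ x, φ x * Dis U V Θ x = ν / 2 * (∫ x, φ x * lap (Eng U V Θ) x)
      - (∫ x, φ x * ∑ j, pd (Flux U V Θ j) j x) - ∫ x, φ x * ∑ j, U j x * pd p j x := by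
    have i4 : Integrable fun x => ν / 2 * (φ x * lap (Eng U V Θ) x)
        - φ x * ∑ j, pd (Flux U V Θ j) j x := (i1.const_mul _).sub i2
    rw [← integral_const_mul, ← integral_const_mul, ← integral_sub (i1.const_mul _) i2,
      ← integral_sub i4 i3]
    congr 1; funext x
    linear_combination φ x * h.pt x
  rw [this, g, d1, d2]; ring

lemma exists_cut : ∃ (φ : R3 → ℝ) (B : ℝ), Sm φ ∧ 0 < B ∧ (∀ x, 0 ≤ φ x) ∧ (∀ x, φ x ≤ 1) ∧
    (∀ x, ‖x‖ ≤ 1 → φ x = 1) ∧ (∀ x, 2 ≤ ‖x‖ → φ x = 0) ∧ (∀ j x, |pd φ j x| ≤ B) ∧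
    (∀ x, |lap φ x| ≤ B) ∧ (∀ j x, pd φ j x ≠ 0 → 1 ≤ ‖x‖ ∧ ‖x‖ ≤ 2) ∧
    (∀ x, lap φ x ≠ 0 → 1 ≤ ‖x‖ ∧ ‖x‖ ≤ 2) := by
  let b : ContDiffBump (0 : R3) := ⟨1, 2, by norm_num, by norm_num⟩
  have hs : Sm b := b.contDiff
  have hc : HasCompactSupport b := b.hasCompactSupport
  have one : ∀ x : R3, ‖x‖ ≤ 1 → b x = 1 := fun x hx => b.one_of_mem_closedBall (by simpa using hx)
  have zer : ∀ x : R3, 2 ≤ ‖x‖ → b x = 0 := fun x hx => b.zero_of_le_dist (by simpa using hx)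
  have hb : ∀ f : R3 → ℝ, Sm f → HasCompactSupport f → ∃ B, ∀ x, |f x| ≤ B := by
    intro f hf hfc
    exact hfc.exists_bound_of_continuous hf.continuous
  choose B1 hB1 using fun j => hb (pd b j) (hs.pd j) (pd_cs hc j)
  have z1 : ∀ j x, ‖x‖ < 1 → pd b j x = 0 := by
    intro j x hx
    have he : (b : R3 → ℝ) =ᶠ[nhds x] fun _ => 1 := by
      have : ∀ᶠ y : R3 in nhds x, ‖y‖ < 1 := continuous_norm.continuousAt.eventually (gt_mem_nhds hx)
      filter_upwards [this] with y hy using one y hy.le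
    unfold pd
    rw [he.fderiv_eq]; simp
  have z2 : ∀ x, ‖x‖ < 1 → lap b x = 0 := by
    intro x hx
    unfold lap
    refine Finset.sum_eq_zero fun j _ => ?_
    have he : pd b j =ᶠ[nhds x] fun _ => 0 := by
      have : ∀ᶠ y : R3 in nhds x, ‖y‖ < 1 := continuous_norm.continuousAt.eventually (gt_mem_nhds hx)
      filter_upwards [this] with y hy using z1 j y hy
    rw [pd, he.fderiv_eq]; simp
  have o2 : ∀ x : R3, 2 < ‖x‖ → b x = 0 := fun x hx => zer x hx.le
  obtain ⟨B2, hB2⟩ := hb (lap b) hs.lap (cs_of_out (lap_zero_out o2))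
  have hB2' : 0 ≤ B2 := (abs_nonneg _).trans (hB2 0)
  have hB1' : ∀ j, 0 ≤ B1 j := fun j => (abs_nonneg _).trans (hB1 j 0)
  refine ⟨b, ∑ j, B1 j + B2 + 1, hs, ?_, fun x => b.nonneg, fun x => b.le_one, one, zer, ?_, ?_, ?_, ?_⟩
  · have := Finset.sum_nonneg fun j (_ : j ∈ Finset.univ) => hB1' j
    linarith
  · intro j x
    have := Finset.single_le_sum (fun j _ => hB1' j) (Finset.mem_univ j)
    linarith [hB1 j x]
  · intro x
    have := Finset.sum_nonneg fun j (_ : j ∈ Finset.univ) => hB1' j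
    linarith [hB2 x]
  · intro j x hx
    by_contra hcon
    rw [not_and_or, not_le, not_le] at hcon
    rcases hcon with h | h
    · exact hx (z1 j x h)
    · exact hx (pd_zero_out o2 j x h)
  · intro x hx
    by_contra hcon
    rw [not_and_or, not_le, not_le] at hcon
    rcases hcon with h | h
    · exact hx (z2 x h)
    · exact hx (lap_zero_out o2 x h)

end

lemma abs_sum3 {f : Fin 3 → ℝ} {c : ℝ} (h : ∀ i, |f i| ≤ c) : |∑ i, f i| ≤ 3 * c := by
  refine (Finset.abs_sum_le_sum_abs _ _).trans ?_
  rw [Fin.sum_univ_three]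
  linarith [h 0, h 1, h 2]

lemma estimate : ∃ (φ : R3 → ℝ) (C : ℝ), Sm φ ∧ 0 < C ∧ (∀ x, 0 ≤ φ x) ∧ (∀ x, φ x ≤ 1) ∧
    (∀ x, ‖x‖ ≤ 1 → φ x = 1) ∧ (∀ x, 2 ≤ ‖x‖ → φ x = 0) ∧
    ∀ (ν : ℝ) (U V : Fin 3 → R3 → ℝ) (Θ p : R3 → ℝ) (a c : ℝ), Sys ν U V Θ p → 0 ≤ ν → 0 < a → 0 ≤ c →
      (∀ i x, 1 / 4 ≤ ‖x‖ → ‖x‖ ≤ 3 → |U i x| ≤ a) →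
      (∀ i x, 1 / 4 ≤ ‖x‖ → ‖x‖ ≤ 3 → |V i x| ≤ c) →
      (∀ x, 1 / 4 ≤ ‖x‖ → ‖x‖ ≤ 3 → |Θ x| ≤ a) →
      ν * ∫ x, φ x * Dis U V Θ x ≤ C * (ν * (a ^ 2 + c ^ 2) + a * (a ^ 2 + c ^ 2) + a * c) := by
  obtain ⟨φ, B, hφ, hB, h0, h1, hone, hzer, hp1, hl1, hp2, hl2⟩ := exists_cut
  obtain ⟨P, hP, hpress⟩ := pressure
  have hV3 := V3_nonneg
  have hc : HasCompactSupport φ := cs_of_out (r := 2) fun x hx => hzer x hx.le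
  refine ⟨φ, 17 * B * V3 + 3 * P * B, hφ, by positivity, h0, h1, hone, hzer, ?_⟩
  intro ν U V Θ p a c h hν ha hc0 hU hV hT
  have sqb : ∀ {t s : ℝ}, |t| ≤ s → |t ^ 2| ≤ s ^ 2 := by
    intro t s hts
    rw [abs_pow]; exact pow_le_pow_left₀ (abs_nonneg _) hts 2
  have mulb : ∀ {t s t' s' : ℝ}, |t| ≤ s → |t'| ≤ s' → |t * t'| ≤ s * s' := by
    intro t s t' s' h1 h2
    rw [abs_mul]; exact mul_le_mul h1 h2 (abs_nonneg _) ((abs_nonneg _).trans h1)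
  have bE : ∀ x, 1 / 4 ≤ ‖x‖ → ‖x‖ ≤ 3 → |Eng U V Θ x| ≤ 4 * (a ^ 2 + c ^ 2) := by
    intro x x1 x2
    have q1 := abs_sum3 fun i => sqb (hU i x x1 x2)
    have q2 := abs_sum3 fun i => sqb (hV i x x1 x2)
    have q3 := sqb (hT x x1 x2)
    unfold Eng
    have q4 := abs_add_le (∑ i, U i x ^ 2 + ∑ i, V i x ^ 2) (Θ x ^ 2)
    have q5 := abs_add_le (∑ i, U i x ^ 2) (∑ i, V i x ^ 2)
    nlinarith [sq_nonneg c]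
  have bD : ∀ x, 1 / 4 ≤ ‖x‖ → ‖x‖ ≤ 3 → |Dot U V x| ≤ 3 * (a * c) := by
    intro x x1 x2
    exact abs_sum3 fun i => mulb (hU i x x1 x2) (hV i x x1 x2)
  have bF : ∀ j x, 1 / 4 ≤ ‖x‖ → ‖x‖ ≤ 3 → |Flux U V Θ j x| ≤ 5 * (a * (a ^ 2 + c ^ 2)) + a * c := by
    intro j x x1 x2
    have q1 := mulb (bE x x1 x2) (hU j x x1 x2)
    have q2 := mulb (bD x x1 x2) (hV j x x1 x2)
    have q3 := mulb (hT x x1 x2) (hV j x x1 x2)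
    unfold Flux
    have q4 := abs_add_le (1 / 2 * (Eng U V Θ x * U j x) + Dot U V x * V j x) (Θ x * V j x)
    have q5 := abs_add_le (1 / 2 * (Eng U V Θ x * U j x)) (Dot U V x * V j x)
    rw [abs_mul (1 / 2 : ℝ), abs_of_pos (by norm_num : (0 : ℝ) < 1 / 2)] at q5
    have : 0 ≤ a * a ^ 2 := by positivity
    nlinarith
  have T1 : |∫ x, Eng U V Θ x * lap φ x| ≤ 4 * (a ^ 2 + c ^ 2) * B * V3 := by
    refine int_bound (fun x hx => ?_) fun x => ?_
    · have : lap φ x = 0 := by by_contra hh; linarith [(hl2 x hh).2]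
      rw [this, mul_zero]
    · by_cases hh : lap φ x = 0
      · rw [hh, mul_zero, abs_zero]; positivity
      · have := hl2 x hh
        exact mulb (bE x (by linarith) (by linarith)) (hl1 x)
  have T2 : |∫ x, ∑ j, Flux U V Θ j x * pd φ j x| ≤ 3 * ((5 * (a * (a ^ 2 + c ^ 2)) + a * c) * B) * V3 := by
    refine int_bound (fun x hx => Finset.sum_eq_zero fun j _ => ?_) fun x => abs_sum3 fun j => ?_
    · have : pd φ j x = 0 := by by_contra hh; linarith [(hp2 j x hh).2]
      rw [this, mul_zero]
    · by_cases hh : pd φ j x = 0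
      · rw [hh, mul_zero, abs_zero]; positivity
      · have := hp2 j x hh
        exact mulb (bF j x (by linarith) (by linarith)) (hp1 j x)
  have T3 : |∫ x, p x * ∑ j, U j x * pd φ j x| ≤ P * ((3 * (a * B)) * ((a ^ 2 + c ^ 2) + ν * a)) := by
    refine hpress p (fun x => ∑ j, U j x * pd φ j x) U (fun i j x => U j x * U i x + V j x * V i x)
      ν a (a ^ 2 + c ^ 2) (3 * (a * B)) h.hp h.hU
      (fun i j => ((h.hU j).mul' (h.hU i)).add ((h.hV j).mul' (h.hV i)))
      (ContDiff.sum fun j _ => (h.hU j).mul' (hφ.pd j)) ?_ ?_ hν (by positivity) ha.le (by positivity)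
      ?_ h.e4 hU ?_ ?_
    · intro x hx
      obtain ⟨j, -, hj⟩ := Finset.exists_ne_zero_of_sum_ne_zero hx
      exact hp2 j x (right_ne_zero_of_mul hj)
    · have d := div_ibp hφ hc h.hU
      simp only [h.e4, mul_zero, integral_zero] at d
      linarith
    · intro i x
      have e1 := h.e1 i x
      have e4 := h.e4 x
      simp only [pd_add ((h.hU _).mul' (h.hU i)) ((h.hV _).mul' (h.hV i)),
        pd_mul (h.hU _) (h.hU i)]
      simp only [Fin.sum_univ_three] at *
      linear_combination e1 + U i x * e4
    · intro i j x x1 x2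
      have q1 := mulb (hU j x x1 x2) (hU i x x1 x2)
      have q2 := mulb (hV j x x1 x2) (hV i x x1 x2)
      have := abs_add_le (U j x * U i x) (V j x * V i x)
      show |U j x * U i x + V j x * V i x| ≤ _
      linarith [sq a, sq c]
    · intro x
      refine abs_sum3 fun j => ?_
      by_cases hh : pd φ j x = 0
      · rw [hh, mul_zero, abs_zero]; positivity
      · have := hp2 j x hh
        exact mulb (hU j x (by linarith) (by linarith)) (hp1 j x)
  rw [h.energy hφ hc]
  have t1 := mul_le_mul_of_nonneg_left ((le_abs_self _).trans T1) (by positivity : 0 ≤ ν / 2)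
  have t2 := (le_abs_self _).trans T2
  have t3 := (le_abs_self _).trans T3
  refine (add_le_add (add_le_add t1 t2) t3).trans ?_
  rw [← sub_nonneg]
  have : (17 * B * V3 + 3 * P * B) * (ν * (a ^ 2 + c ^ 2) + a * (a ^ 2 + c ^ 2) + a * c)
    - (ν / 2 * (4 * (a ^ 2 + c ^ 2) * B * V3) + 3 * ((5 * (a * (a ^ 2 + c ^ 2)) + a * c) * B) * V3
      + P * ((3 * (a * B)) * ((a ^ 2 + c ^ 2) + ν * a)))
    = 15 * B * V3 * (ν * (a ^ 2 + c ^ 2)) + 2 * B * V3 * (a * (a ^ 2 + c ^ 2)) + 14 * B * V3 * (a * c)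
      + 3 * P * B * (ν * c ^ 2) + 3 * P * B * (a * c) := by ring
  rw [this]
  positivity

lemma rp {S t : ℝ} (hS : 0 ≤ S) (h : S ^ 3 ≤ t) (n : ℕ) : S ^ n ≤ t ^ ((n : ℝ) / 3) := by
  have h1 : (S ^ 3) ^ ((n : ℝ) / 3) = S ^ n := by
    rw [← Real.rpow_natCast, ← Real.rpow_mul hS, ← Real.rpow_natCast]
    congr 1; push_cast; ring
  rw [← h1]
  exact Real.rpow_le_rpow (by positivity) h (by positivity)

lemma dec_one {S t w M : ℝ} (hS : 0 < S) (h : S ^ 3 / 8 ≤ t) (hw : 0 ≤ w) (n : ℕ)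
    (hM : t ^ ((n : ℝ) / 3) * w ≤ M) : w ≤ 2 ^ n * M * S⁻¹ ^ n := by
  have h0 : (S / 2) ^ 3 ≤ t := by rw [div_pow]; norm_num; exact h
  have h1 := rp (S := S / 2) (by positivity) h0 n
  have h2 : (S / 2) ^ n * w ≤ M := (mul_le_mul_of_nonneg_right h1 hw).trans hM
  have : w = 2 ^ n * ((S / 2) ^ n * w) * S⁻¹ ^ n := by
    rw [div_pow, inv_pow]; field_simp
  rw [this]
  gcongr

lemma decay {u v : R3 → R3} {θ : R3 → ℝ}
    (hu_decay : ∀ ε > 0, ∃ K : ℝ, ∀ x : R3, K ≤ ‖x‖ → ‖x‖ ^ (2 / 3 : ℝ) * ‖u x‖ < ε)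
    (hv_decay : ∃ M K : ℝ, 0 < M ∧ 0 < K ∧ ∀ x : R3, K ≤ ‖x‖ → ‖x‖ ^ (4 / 3 : ℝ) * ‖v x‖ ≤ M)
    (hθ_decay : ∀ ε > 0, ∃ K : ℝ, ∀ x : R3, K ≤ ‖x‖ → ‖x‖ ^ (2 / 3 : ℝ) * |θ x| < ε) :
    ∃ M : ℝ, 0 < M ∧ ∀ ε > 0, ∃ S0 : ℝ, 1 ≤ S0 ∧ ∀ S, S0 ≤ S → S⁻¹ ≤ ε ∧ ∀ x : R3, 1 / 4 ≤ ‖x‖ →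
      (∀ i, |u (S ^ 3 • x) i| ≤ 4 * ε * S⁻¹ ^ 2) ∧ (∀ i, |v (S ^ 3 • x) i| ≤ 16 * M * S⁻¹ ^ 4) ∧
      |θ (S ^ 3 • x)| ≤ 4 * ε * S⁻¹ ^ 2 := by
  obtain ⟨M, K2, hM, hK2, hv⟩ := hv_decay
  refine ⟨M, hM, fun ε hε => ?_⟩
  obtain ⟨K1, hu⟩ := hu_decay ε hε
  obtain ⟨K3, ht⟩ := hθ_decay ε hε
  refine ⟨max 1 (max ε⁻¹ (8 * max K1 (max K2 K3))), le_max_left _ _, fun S hS => ?_⟩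
  have s1 : 1 ≤ S := (le_max_left _ _).trans hS
  have s2 := (le_max_right _ _).trans hS
  have s3 : ε⁻¹ ≤ S := (le_max_left _ _).trans s2
  have s4 := (le_max_right _ _).trans s2
  have hS0 : 0 < S := by linarith
  refine ⟨inv_le_of_inv_le₀ hε s3, fun x hx => ?_⟩
  have hn : ‖S ^ 3 • x‖ = S ^ 3 * ‖x‖ := by rw [norm_smul, Real.norm_of_nonneg (by positivity)]
  have hS3 : S ≤ S ^ 3 := le_self_pow₀ s1 (by norm_num)
  have h8 : S ^ 3 / 8 ≤ ‖S ^ 3 • x‖ := by rw [hn]; nlinarith [pow_pos hS0 3]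
  have hm : max K1 (max K2 K3) ≤ ‖S ^ 3 • x‖ := by linarith
  have k1 : K1 ≤ ‖S ^ 3 • x‖ := (le_max_left _ _).trans hm
  have k2 : K2 ≤ ‖S ^ 3 • x‖ := (le_max_left _ _).trans ((le_max_right _ _).trans hm)
  have k3 : K3 ≤ ‖S ^ 3 • x‖ := (le_max_right _ _).trans ((le_max_right _ _).trans hm)
  have a1 := dec_one (M := ε) hS0 h8 (norm_nonneg (u (S ^ 3 • x))) 2 (by exact_mod_cast (hu _ k1).le)
  have a2 := dec_one (M := M) hS0 h8 (norm_nonneg (v (S ^ 3 • x))) 4 (by exact_mod_cast (hv _ k2))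
  have a3 := dec_one (M := ε) hS0 h8 (abs_nonneg (θ (S ^ 3 • x))) 2 (by exact_mod_cast (ht _ k3).le)
  norm_num at a1 a2 a3
  refine ⟨fun i => ?_, fun i => ?_, ?_⟩
  · have := PiLp.norm_apply_le (u (S ^ 3 • x)) i
    rw [Real.norm_eq_abs] at this
    simpa using this.trans a1
  · have := PiLp.norm_apply_le (v (S ^ 3 • x)) i
    rw [Real.norm_eq_abs] at this
    simpa using this.trans a2
  · simpa using a3

lemma sys_scale {u v : R3 → R3} {pr θ : R3 → ℝ} (hu : ∀ i, Sm fun x => u x i) (hv : ∀ i, Sm fun x => v x i)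
    (hpr : Sm pr) (hθ : Sm θ) (hsol : TCM u v pr θ) {R : ℝ} (hR : 0 < R) :
    Sys R⁻¹ (fun i x => u (R • x) i) (fun i x => v (R • x) i) (fun x => θ (R • x)) (fun x => pr (R • x)) := by
  obtain ⟨h1, h2, h3, h4⟩ := hsol
  have pu : ∀ i j x, pd (fun y => u (R • y) i) j x = R * pd (fun y => u y i) j (R • x) :=
    fun i j x => pd_scale R (hu i) j x
  have pv : ∀ i j x, pd (fun y => v (R • y) i) j x = R * pd (fun y => v y i) j (R • x) :=
    fun i j x => pd_scale R (hv i) j x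
  have lu : ∀ i x, lap (fun y => u (R • y) i) x = R ^ 2 * lap (fun y => u y i) (R • x) :=
    fun i x => lap_scale R (hu i) x
  have lv : ∀ i x, lap (fun y => v (R • y) i) x = R ^ 2 * lap (fun y => v y i) (R • x) :=
    fun i x => lap_scale R (hv i) x
  have pvv : ∀ i j x, pd (fun y => v (R • y) j * v (R • y) i) j x
      = R * pd (fun y => v y j * v y i) j (R • x) :=
    fun i j x => pd_scale R ((hv j).mul' (hv i)) j x
  have hRi : R⁻¹ * R = 1 := inv_mul_cancel₀ hR.ne'
  refine ⟨fun i => (hu i).scale R, fun i => (hv i).scale R, hθ.scale R, hpr.scale R, ?_, ?_, ?_, ?_⟩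
  · intro i x
    have := h1 i (R • x)
    simp only [pu, lu, pvv, pd_scale R hpr, Fin.sum_univ_three] at *
    linear_combination R * this - R * lap (fun y => u y i) (R • x) * hRi
  · intro i x
    have := h2 i (R • x)
    simp only [pu, pv, lv, pd_scale R hθ, Fin.sum_univ_three] at *
    linear_combination R * this - R * lap (fun y => v y i) (R • x) * hRi
  · intro x
    have := h3 (R • x)
    simp only [pv, pd_scale R hθ, lap_scale R hθ, Fin.sum_univ_three] at *
    linear_combination R * this - R * lap θ (R • x) * hRi
  · intro x
    have := h4 (R • x)
    simp only [pu, Fin.sum_univ_three] at *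
    linear_combination R * this

lemma dis_scale {U V : Fin 3 → R3 → ℝ} {Θ : R3 → ℝ} (hU : ∀ i, Sm (U i)) (hV : ∀ i, Sm (V i)) (hT : Sm Θ)
    (R : ℝ) (x : R3) :
    Dis (fun i x => U i (R • x)) (fun i x => V i (R • x)) (fun x => Θ (R • x)) x
      = R ^ 2 * Dis U V Θ (R • x) := by
  unfold Dis
  simp only [pd_scale R (hU _), pd_scale R (hV _), pd_scale R hT, mul_pow, ← Finset.mul_sum]
  ring

lemma const_of_pd {f : R3 → ℝ} (hf : Sm f) (h : ∀ j x, pd f j x = 0) (x y : R3) : f x = f y := by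
  refine is_const_of_fderiv_eq_zero (𝕜 := ℝ) (hf.differentiable (by simp)) (fun z => ?_) x y
  have : (fderiv ℝ f z).toLinearMap = 0 := by
    refine (EuclideanSpace.basisFun (Fin 3) ℝ).toBasis.ext fun j => ?_
    simpa [pd] using h j z
  ext w
  exact LinearMap.congr_fun this w

lemma final {u v : R3 → R3} {pr θ : R3 → ℝ} (hu : ∀ i, Sm fun x => u x i) (hv : ∀ i, Sm fun x => v x i)
    (hpr : Sm pr) (hθ : Sm θ) (hsol : TCM u v pr θ) {M : ℝ} (hM : 0 < M)
    (hd : ∀ ε > 0, ∃ S0 : ℝ, 1 ≤ S0 ∧ ∀ S, S0 ≤ S → S⁻¹ ≤ ε ∧ ∀ x : R3, 1 / 4 ≤ ‖x‖ →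
      (∀ i, |u (S ^ 3 • x) i| ≤ 4 * ε * S⁻¹ ^ 2) ∧ (∀ i, |v (S ^ 3 • x) i| ≤ 16 * M * S⁻¹ ^ 4) ∧
      |θ (S ^ 3 • x)| ≤ 4 * ε * S⁻¹ ^ 2) :
    ∀ x, Dis (fun i x => u x i) (fun i x => v x i) θ x = 0 := by
  obtain ⟨φ, C, hφ, hC, h0, h1, hone, hzer, hest⟩ := estimate
  have h3 : Module.finrank ℝ R3 = 3 := by simp
  set e := Dis (fun i x => u x i) (fun i x => v x i) θ with he
  have hes : Sm e :=
    ((ContDiff.sum fun i _ => ContDiff.sum fun j _ => ((hu i).pd j).sq').add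
      (ContDiff.sum fun i _ => ContDiff.sum fun j _ => ((hv i).pd j).sq')).add
      (ContDiff.sum fun j _ => (hθ.pd j).sq')
  have hepos : ∀ x, 0 ≤ e x := by intro x; rw [he]; unfold Dis; positivity
  have hcs : ∀ R : ℝ, 0 < R → HasCompactSupport fun x => φ (R⁻¹ • x) := by
    intro R hR
    refine cs_of_out (r := 2 * R) fun x hx => hzer _ ?_
    rw [norm_smul, Real.norm_of_nonneg (by positivity), inv_mul_eq_div, le_div_iff₀ hR]
    exact hx.le
  have hint : ∀ R : ℝ, 0 < R → Integrable fun x => φ (R⁻¹ • x) * e x := fun R hR =>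
    cs_int ((hφ.scale R⁻¹).mul' hes).continuous (hcs R hR).mul_right
  set Q := 5 * (16 + 256 * M ^ 2) + 64 * M with hQ
  have main : ∀ ε : ℝ, 0 < ε → ε ≤ 1 → ∃ S0 : ℝ, 1 ≤ S0 ∧ ∀ S, S0 ≤ S →
      ∫ x, φ ((S ^ 3)⁻¹ • x) * e x ≤ C * Q * ε := by
    intro ε hε hε1
    obtain ⟨S0, hS0, hS⟩ := hd ε hε
    refine ⟨S0, hS0, fun S hSS => ?_⟩
    obtain ⟨hL, hb⟩ := hS S hSS
    have hSp : 0 < S := by linarith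
    have hR : 0 < S ^ 3 := by positivity
    have hLp : 0 < S⁻¹ := by positivity
    have E := hest (S ^ 3)⁻¹ _ _ _ _ (4 * ε * S⁻¹ ^ 2) (16 * M * S⁻¹ ^ 4)
      (sys_scale hu hv hpr hθ hsol hR) (by positivity) (by positivity) (by positivity)
      (fun i x x1 _ => (hb x x1).1 i) (fun i x x1 _ => (hb x x1).2.1 i) (fun x x1 _ => (hb x x1).2.2)
    have ds : ∀ x, Dis (fun i x => u (S ^ 3 • x) i) (fun i x => v (S ^ 3 • x) i) (fun x => θ (S ^ 3 • x)) x
        = (S ^ 3) ^ 2 * e (S ^ 3 • x) := fun x => dis_scale hu hv hθ (S ^ 3) x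
    simp only [ds] at E
    have ch : ∫ x, φ x * ((S ^ 3) ^ 2 * e (S ^ 3 • x)) = S⁻¹ ^ 3 * ∫ x, φ ((S ^ 3)⁻¹ • x) * e x := by
      have := Measure.integral_comp_smul (volume : Measure R3)
        (fun x => φ ((S ^ 3)⁻¹ • x) * e x) (S ^ 3)
      rw [h3, smul_eq_mul, abs_of_pos (by positivity)] at this
      have sc : ∀ x : R3, (S ^ 3)⁻¹ • S ^ 3 • x = x := fun x => inv_smul_smul₀ hR.ne' x
      simp only [sc] at this
      have e1 : ∀ x, φ x * ((S ^ 3) ^ 2 * e (S ^ 3 • x)) = (S ^ 3) ^ 2 * (φ x * e (S ^ 3 • x)) := by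
        intro x; ring
      simp only [e1]
      rw [integral_const_mul, this, ← mul_assoc]
      congr 1
      field_simp
    rw [ch] at E
    generalize (∫ x, φ ((S ^ 3)⁻¹ • x) * e x) = I at E ⊢
    rw [← inv_pow] at E
    set L := S⁻¹ with hLdef
    have hL1 : L ≤ 1 := hL.trans hε1
    have p1 : L ^ 3 * ((4 * ε * L ^ 2) ^ 2 + (16 * M * L ^ 4) ^ 2) ≤ (16 + 256 * M ^ 2) * (ε * L ^ 6) := by
      have q1 : ε ^ 2 * L ^ 7 ≤ ε * L ^ 6 := by
        calc ε ^ 2 * L ^ 7 = (ε * L ^ 6) * (ε * L) := by ring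
          _ ≤ (ε * L ^ 6) * 1 := by gcongr; exact mul_le_one₀ hε1 hLp.le hL1
          _ = _ := by ring
      have q2 : L ^ 11 ≤ ε * L ^ 6 := by
        calc L ^ 11 = (L * L ^ 6) * L ^ 4 := by ring
          _ ≤ (ε * L ^ 6) * 1 := by gcongr; exact pow_le_one₀ hLp.le hL1
          _ = _ := by ring
      have q3 := mul_le_mul_of_nonneg_left q2 (by positivity : 0 ≤ 256 * M ^ 2)
      linarith
    have p2 : 4 * ε * L ^ 2 * ((4 * ε * L ^ 2) ^ 2 + (16 * M * L ^ 4) ^ 2)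
        ≤ 4 * (16 + 256 * M ^ 2) * (ε * L ^ 6) := by
      have q1 : ε ^ 3 * L ^ 6 ≤ ε * L ^ 6 := by
        gcongr; exact pow_le_of_le_one hε.le hε1 (by norm_num)
      have q2 : ε * L ^ 10 ≤ ε * L ^ 6 := by
        gcongr ε * ?_; exact pow_le_pow_of_le_one hLp.le hL1 (by norm_num)
      have q3 := mul_le_mul_of_nonneg_left q2 (by positivity : 0 ≤ 4 * (256 * M ^ 2))
      linarith
    have p3 : 4 * ε * L ^ 2 * (16 * M * L ^ 4) = 64 * M * (ε * L ^ 6) := by ring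
    have p4 := mul_le_mul_of_nonneg_left (add_le_add (add_le_add p1 p2) p3.le) hC.le
    have p5 : L ^ 6 * I ≤ L ^ 6 * (C * Q * ε) := by
      have := E.trans p4
      rw [hQ]
      linarith
    exact le_of_mul_le_mul_left p5 (by positivity)
  intro x0
  set r := ‖x0‖ + 1 with hr
  have hrp : 0 < r := by positivity
  have J : ∫ x, φ (r⁻¹ • x) * e x ≤ 0 := by
    have hQ0 : 0 < Q := by positivity
    refine le_of_forall_pos_le_add fun δ hδ => ?_
    rw [zero_add]
    obtain ⟨S0, hS0, hS⟩ := main (min 1 (δ / (C * Q))) (lt_min one_pos (by positivity)) (min_le_left _ _)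
    set S := max S0 (2 * r)
    have s1 : 1 ≤ S := hS0.trans (le_max_left _ _)
    have hSp : 0 < S := by linarith
    have s3 : 2 * r ≤ S ^ 3 := (le_max_right _ _).trans (le_self_pow₀ s1 (by norm_num))
    have hm := hS S (le_max_left _ _)
    have : C * Q * min 1 (δ / (C * Q)) ≤ δ := by
      calc C * Q * min 1 (δ / (C * Q)) ≤ C * Q * (δ / (C * Q)) := by gcongr; exact min_le_right _ _
        _ = δ := by field_simp
    refine le_trans (integral_mono (hint r hrp) (hint (S ^ 3) (by positivity)) fun x => ?_) (hm.trans this)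
    refine mul_le_mul_of_nonneg_right ?_ (hepos x)
    by_cases hx : 2 * r ≤ ‖x‖
    · have : φ (r⁻¹ • x) = 0 := by
        refine hzer _ ?_
        rw [norm_smul, Real.norm_of_nonneg (by positivity), inv_mul_eq_div, le_div_iff₀ hrp]
        exact hx
      rw [this]; exact h0 _
    · have : φ ((S ^ 3)⁻¹ • x) = 1 := by
        refine hone _ ?_
        rw [norm_smul, Real.norm_of_nonneg (by positivity), inv_mul_eq_div, div_le_one (by positivity)]
        linarith
      rw [this]; exact h1 _
  by_contra hne
  have hx0 : φ (r⁻¹ • x0) = 1 := by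
    refine hone _ ?_
    rw [norm_smul, Real.norm_of_nonneg (by positivity), inv_mul_eq_div, div_le_one (by positivity)]
    linarith
  have := Continuous.integral_pos_of_hasCompactSupport_nonneg_nonzero (μ := (volume : Measure R3))
    (f := fun x => φ (r⁻¹ • x) * e x) (x := x0)
    ((hφ.scale r⁻¹).mul' hes).continuous (hcs r hrp).mul_right
    (fun x => mul_nonneg (h0 _) (hepos x)) (by simp only [hx0, one_mul]; exact hne)
  linarith


theorem liouville_tcm_C3 (u v : R3 → R3) (pr θ : R3 → ℝ)
    (hu : ContDiff ℝ (⊤ : ℕ∞) u) (hv : ContDiff ℝ (⊤ : ℕ∞) v)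
    (hpr : ContDiff ℝ (⊤ : ℕ∞) pr) (hθ : ContDiff ℝ (⊤ : ℕ∞) θ)
    (hsol : TCM u v pr θ)
    (hu_decay : ∀ ε > 0, ∃ K : ℝ, ∀ x : R3, K ≤ ‖x‖ → ‖x‖ ^ (2 / 3 : ℝ) * ‖u x‖ < ε)
    (hv_decay : ∃ M K : ℝ, 0 < M ∧ 0 < K ∧ ∀ x : R3, K ≤ ‖x‖ → ‖x‖ ^ (4 / 3 : ℝ) * ‖v x‖ ≤ M)
    (hθ_decay : ∀ ε > 0, ∃ K : ℝ, ∀ x : R3, K ≤ ‖x‖ → ‖x‖ ^ (2 / 3 : ℝ) * |θ x| < ε) :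
    (∀ x, u x = 0) ∧ (∀ x, v x = 0) ∧ (∀ x, θ x = 0) := by
  have hu1 : ∀ i, Sm fun x => u x i := fun i => (EuclideanSpace.proj (𝕜 := ℝ) i).contDiff.comp hu
  have hv1 : ∀ i, Sm fun x => v x i := fun i => (EuclideanSpace.proj (𝕜 := ℝ) i).contDiff.comp hv
  obtain ⟨M, hM, hd⟩ := decay hu_decay hv_decay hθ_decay
  have hD := final hu1 hv1 hpr hθ hsol hM hd
  have hz : ∀ x, (∀ i j, pd (fun y => u y i) j x = 0) ∧ (∀ i j, pd (fun y => v y i) j x = 0) ∧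
      ∀ j, pd θ j x = 0 := by
    intro x
    have h := hD x
    unfold Dis at h
    have n1 : 0 ≤ ∑ i, ∑ j, pd (fun y => u y i) j x ^ 2 := by positivity
    have n2 : 0 ≤ ∑ i, ∑ j, pd (fun y => v y i) j x ^ 2 := by positivity
    have n3 : 0 ≤ ∑ j, pd θ j x ^ 2 := by positivity
    have two : ∀ g : Fin 3 → Fin 3 → ℝ, ∑ i, ∑ j, g i j ^ 2 = 0 → ∀ i j, g i j = 0 := by
      intro g hg i j
      rw [Finset.sum_eq_zero_iff_of_nonneg fun i _ => Finset.sum_nonneg fun j _ => sq_nonneg _] at hg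
      have := hg i (Finset.mem_univ _)
      rw [Finset.sum_eq_zero_iff_of_nonneg fun j _ => sq_nonneg _] at this
      exact pow_eq_zero_iff (two_ne_zero) |>.1 (this j (Finset.mem_univ _))
    refine ⟨two _ (by linarith), two _ (by linarith), fun j => ?_⟩
    have : ∑ j, pd θ j x ^ 2 = 0 := by linarith
    rw [Finset.sum_eq_zero_iff_of_nonneg fun j _ => sq_nonneg _] at this
    exact pow_eq_zero_iff (two_ne_zero) |>.1 (this j (Finset.mem_univ _))
  have van : ∀ (f : R3 → ℝ) (k : ℝ), 0 < k → Sm f → (∀ j x, pd f j x = 0) →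
      (∀ ε > 0, ε ≤ 1 → ∃ y, |f y| ≤ k * ε) → ∀ x, f x = 0 := by
    intro f k hk hf hp hs x
    have : |f x| ≤ 0 := by
      refine le_of_forall_pos_le_add fun δ hδ => ?_
      obtain ⟨y, hy⟩ := hs (min 1 (δ / k)) (lt_min one_pos (by positivity)) (min_le_left _ _)
      rw [const_of_pd hf hp x y, zero_add]
      refine hy.trans ?_
      calc k * min 1 (δ / k) ≤ k * (δ / k) := by gcongr; exact min_le_right _ _
        _ = δ := by field_simp
    exact abs_eq_zero.1 (le_antisymm this (abs_nonneg _))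
  have pick : ∀ ε > 0, ε ≤ 1 → ∃ y, (∀ i, |u y i| ≤ 4 * ε) ∧ (∀ i, |v y i| ≤ 16 * M * ε) ∧ |θ y| ≤ 4 * ε := by
    intro ε hε hε1
    obtain ⟨S0, hS0, hS⟩ := hd ε hε
    obtain ⟨hL, hb⟩ := hS S0 le_rfl
    have hLp : 0 < S0⁻¹ := by positivity
    obtain ⟨b1, b2, b3⟩ := hb (EuclideanSpace.single 0 1) (by simp; norm_num)
    have l2 : S0⁻¹ ^ 2 ≤ 1 := pow_le_one₀ hLp.le (hL.trans hε1)
    have l4 : S0⁻¹ ^ 4 ≤ ε := (pow_le_of_le_one hLp.le (hL.trans hε1) (by norm_num)).trans hL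
    have c2 : 4 * ε * S0⁻¹ ^ 2 ≤ 4 * ε := mul_le_of_le_one_right (by positivity) l2
    have c4 : 16 * M * S0⁻¹ ^ 4 ≤ 16 * M * ε := mul_le_mul_of_nonneg_left l4 (by positivity)
    exact ⟨_, fun i => (b1 i).trans c2, fun i => (b2 i).trans c4, b3.trans c2⟩
  refine ⟨fun x => ?_, fun x => ?_, ?_⟩
  · ext i
    exact van _ 4 (by norm_num) (hu1 i) (fun j x => (hz x).1 i j)
      (fun ε h1 h2 => (pick ε h1 h2).imp fun y hy => hy.1 i) x
  · ext i
    exact van _ (16 * M) (by positivity) (hv1 i) (fun j x => (hz x).2.1 i j)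
      (fun ε h1 h2 => (pick ε h1 h2).imp fun y hy => hy.2.1 i) x
  · exact van θ 4 (by norm_num) hθ (fun j x => (hz x).2.2 j)
      (fun ε h1 h2 => (pick ε h1 h2).imp fun y hy => hy.2.2)
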